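/- Let Σ be a fan in ℝ^n satisfying conditions (2.9.1) and (2.9.2). Let D = (d_1,…,d_r) and D' = (d'_1,…,d'_r) be r-tuples of positive integers with D' − D ∈ (ℤ_{≥0})^r ∖ {0}. Then, for any admissible choice of the pair (φ_D, (x_{D,1},…,x_{D,r})), the stabilization map s_{D,D'} : Pol*_D(S¹,X_Σ) → Pol*_{D'}(S¹,X_Σ) is a homotopy equivalence through dimension d(D,Σ) = 2(r_min(Σ)−1)·d_min − 2. -/

import Mathlib

open scoped BigOperators
attribute [local instance] Classical.propDecidable

noncomputable section

namespace Toric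


/-! ### Cones and fans -/

/-- The real vector associated to an integer vector. -/
def zr {n : ℕ} (v : Fin n → ℤ) : Fin n → ℝ := fun i => (v i : ℝ)

/-- A convex rational polyhedral cone in `ℝ^n`. -/
def IsRatCone {n : ℕ} (σ : Set (Fin n → ℝ)) : Prop :=
  ∃ s : Finset (Fin n → ℤ),
    σ = {x | ∃ lam : (Fin n → ℤ) → ℝ, (∀ v, 0 ≤ lam v) ∧ x = ∑ v ∈ s, lam v • zr v}

/-- A cone is strongly convex if `σ ∩ (-σ) = {0}`. -/
def StronglyConvex {n : ℕ} (σ : Set (Fin n → ℝ)) : Prop := σ ∩ (-σ) = {0}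

/-- `τ` is a face of `σ`, cut out by a linear form nonnegative on `σ`. -/
def IsFaceOf {n : ℕ} (τ σ : Set (Fin n → ℝ)) : Prop :=
  ∃ L : (Fin n → ℝ) →ₗ[ℝ] ℝ, (∀ x ∈ σ, 0 ≤ L x) ∧ τ = σ ∩ {x | L x = 0}

/-- A fan in `ℝ^n`: a finite collection of strongly convex rational polyhedral cones,
closed under taking faces, such that the intersection of two cones is a face of each;
we also require that it strictly contains `{0}`. -/
structure Fan (n : ℕ) where
  cones : Set (Set (Fin n → ℝ))
  finite : cones.Finite
  ratCone : ∀ σ ∈ cones, IsRatCone σ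
  stronglyConvex : ∀ σ ∈ cones, StronglyConvex σ
  face_mem : ∀ σ ∈ cones, ∀ τ, IsFaceOf τ σ → τ ∈ cones
  inter_face : ∀ σ ∈ cones, ∀ τ ∈ cones, IsFaceOf (σ ∩ τ) σ
  zero_mem : ({0} : Set (Fin n → ℝ)) ∈ cones
  nontrivial : cones ≠ {({0} : Set (Fin n → ℝ))}

/-- A fan is complete if its cones cover `ℝ^n`. -/
def Fan.Complete {n : ℕ} (F : Fan n) : Prop := ⋃₀ F.cones = Set.univ

/-- A fan is non-singular if each of its cones is spanned by part of a `ℤ`-basis of `ℤ^n`. -/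
def Fan.NonSingular {n : ℕ} (F : Fan n) : Prop :=
  ∀ σ ∈ F.cones, ∃ (b : Module.Basis (Fin n) ℤ (Fin n → ℤ)) (s : Finset (Fin n)),
    σ = {x | ∃ lam : Fin n → ℝ, (∀ i, 0 ≤ lam i) ∧ x = ∑ i ∈ s, lam i • zr (b i)}

/-- The ray (one-dimensional cone) generated by a vector. -/
def ray {n : ℕ} (v : Fin n → ℝ) : Set (Fin n → ℝ) := {x | ∃ t : ℝ, 0 ≤ t ∧ x = t • v}

/-- The cone spanned by the vectors `n_i`, `i ∈ s`. -/
def coneIdx {n r : ℕ} (N : Fin r → Fin n → ℤ) (s : Finset (Fin r)) : Set (Fin n → ℝ) :=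
  {x | ∃ lam : Fin r → ℝ, (∀ i, 0 ≤ lam i) ∧ x = ∑ i ∈ s, lam i • zr (N i)}

/-- A point of `ℝ^n` lying in the lattice `ℤ^n`. -/
def IsLatticePoint {n : ℕ} (x : Fin n → ℝ) : Prop := ∀ i, ∃ m : ℤ, x i = (m : ℝ)

/-- `N 1, …, N r` is the (complete, repetition-free) list of primitive generators of the
one-dimensional cones of the fan `F`. -/
structure IsPrimGens {n r : ℕ} (F : Fan n) (N : Fin r → Fin n → ℤ) : Prop where
  ray_mem : ∀ k, ray (zr (N k)) ∈ F.cones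
  ne_zero : ∀ k, N k ≠ 0
  primitive : ∀ k, ray (zr (N k)) ∩ {x | IsLatticePoint x}
      = {x | ∃ c : ℕ, x = (c : ℝ) • zr (N k)}
  inj : Function.Injective N
  complete : ∀ σ ∈ F.cones, Module.finrank ℝ (Submodule.span ℝ σ) = 1 →
      ∃ k, σ = ray (zr (N k))

/-- Condition (2.9.1): a positive integral relation among the primitive generators. -/
def Cond1 {n r : ℕ} (N : Fin r → Fin n → ℤ) : Prop :=
  ∃ d : Fin r → ℕ, (∀ k, 0 < d k) ∧ ∑ k, (d k : ℤ) • N k = 0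

/-- Condition (2.9.2): the primitive generators span `ℤ^n` over `ℤ`. -/
def Cond2 {n r : ℕ} (N : Fin r → Fin n → ℤ) : Prop :=
  Submodule.span ℤ (Set.range N) = ⊤

/-- The underlying simplicial complex `K_Σ` of a fan. -/
def KC {n r : ℕ} (F : Fan n) (N : Fin r → Fin n → ℤ) : Set (Finset (Fin r)) :=
  {s | coneIdx N s ∈ F.cones}

/-- A primitive set: it spans no cone of the fan, but every proper subset does. -/
def PrimitiveSet {r : ℕ} (K : Set (Finset (Fin r))) (s : Finset (Fin r)) : Prop :=
  s ∉ K ∧ ∀ t ⊂ s, t ∈ K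

/-- `r_min`: the minimal cardinality of a primitive set. -/
def rmin {r : ℕ} (K : Set (Finset (Fin r))) : ℕ :=
  sInf {m | ∃ s : Finset (Fin r), PrimitiveSet K s ∧ s.card = m}

/-- `d_min = min {d_1, …, d_r}`. -/
def dmin {r : ℕ} (D : Fin r → ℕ) : ℕ := sInf (Set.range D)

/-- The stability dimension `d(D,Σ) = 2(r_min − 1) d_min − 2`. -/
def dBound {r : ℕ} (K : Set (Finset (Fin r))) (D : Fin r → ℕ) : ℤ :=
  2 * ((rmin K : ℤ) - 1) * (dmin D : ℤ) - 2

/-- The connectivity bound `C_D(Σ) = 2(r_min − 1) d_min − 1`. -/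
def CBound {r : ℕ} (K : Set (Finset (Fin r))) (D : Fin r → ℕ) : ℤ :=
  2 * ((rmin K : ℤ) - 1) * (dmin D : ℤ) - 1

/-! ### Coordinate subspaces, `U(K)`, `G_Σ` and the toric quotient -/

/-- The coordinate subspace `L_σ ⊆ ℂ^r`. -/
def LSub {r : ℕ} (σ : Finset (Fin r)) : Set (Fin r → ℂ) := {x | ∀ i ∈ σ, x i = 0}

/-- The complement `U(K)` of the coordinate subspace arrangement of type `K`. -/
def UK {r : ℕ} (K : Set (Finset (Fin r))) : Set (Fin r → ℂ) :=
  (⋃ σ ∈ {s : Finset (Fin r) | s ∉ K}, LSub σ)ᶜ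

lemma mem_UK {r : ℕ} {K : Set (Finset (Fin r))} {x : Fin r → ℂ} :
    x ∈ UK K ↔ ∀ σ : Finset (Fin r), σ ∉ K → ∃ i ∈ σ, x i ≠ 0 := by
  constructor
  · intro h σ hσ
    by_contra hc
    push_neg at hc
    exact h (Set.mem_biUnion hσ (fun i hi => hc i hi))
  · intro h hx
    rcases Set.mem_iUnion₂.1 hx with ⟨σ, hσ, hxσ⟩
    rcases h σ hσ with ⟨i, hi, hne⟩
    exact hne (hxσ i hi)

/-- The group `G_Σ` (as a subset of `ℂ^r`). -/
def GSet {n r : ℕ} (N : Fin r → Fin n → ℤ) : Set (Fin r → ℂ) :=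
  {μ | (∀ k, μ k ≠ 0) ∧ ∀ m : Fin n → ℤ, ∏ k, μ k ^ (∑ j, N k j * m j) = 1}

/-- The orbit relation of the `G_Σ`-action on `U(K_Σ)`. -/
def toricRel {n r : ℕ} (N : Fin r → Fin n → ℤ) (K : Set (Finset (Fin r)))
    (x y : ↥(UK K)) : Prop :=
  ∃ μ ∈ GSet N, (fun i => μ i * (x : Fin r → ℂ) i) = (y : Fin r → ℂ)

/-- The toric variety `X_Σ = U(K_Σ)/G_Σ`, as a topological quotient. -/
def XS {n r : ℕ} (N : Fin r → Fin n → ℤ) (K : Set (Finset (Fin r))) : Type :=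
  Quot (toricRel N K)

instance {n r : ℕ} (N : Fin r → Fin n → ℤ) (K : Set (Finset (Fin r))) :
    TopologicalSpace (XS N K) :=
  instTopologicalSpaceQuot

/-- The quotient map `q_Σ : U(K_Σ) → X_Σ`. -/
def qmap {n r : ℕ} (N : Fin r → Fin n → ℤ) (K : Set (Finset (Fin r))) :
    ↥(UK K) → XS N K :=
  Quot.mk (toricRel N K)

/-- `q_Σ` as a continuous map. -/
def qCont {n r : ℕ} (N : Fin r → Fin n → ℤ) (K : Set (Finset (Fin r))) :
    C(↥(UK K), XS N K) :=
  ⟨qmap N K, continuous_quot_mk⟩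

lemma coneIdx_empty {n r : ℕ} (N : Fin r → Fin n → ℤ) :
    coneIdx N (∅ : Finset (Fin r)) = ({0} : Set (Fin n → ℝ)) := by
  ext x
  constructor
  · rintro ⟨lam, -, hx⟩
    simpa using hx
  · intro hx
    exact ⟨0, fun i => le_refl 0, by simpa using hx⟩

lemma empty_mem_KC {n r : ℕ} (F : Fan n) (N : Fin r → Fin n → ℤ) :
    (∅ : Finset (Fin r)) ∈ KC F N := by
  show coneIdx N ∅ ∈ F.cones
  rw [coneIdx_empty]
  exact F.zero_mem

/-- The point `(1,…,1)`. -/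
def onesC {r : ℕ} : Fin r → ℂ := fun _ => 1

lemma ones_mem_UK {r : ℕ} {K : Set (Finset (Fin r))} (h : (∅ : Finset (Fin r)) ∈ K) :
    (onesC : Fin r → ℂ) ∈ UK K := by
  rw [mem_UK]
  intro σ hσ
  rcases Finset.nonempty_iff_ne_empty.2 (fun he : σ = ∅ => hσ (by rw [he]; exact h)) with ⟨i, hi⟩
  exact ⟨i, hi, one_ne_zero⟩

/-- The base point `(1,…,1)` of `U(K_Σ)`. -/
def onesUK {r : ℕ} {K : Set (Finset (Fin r))} (h : (∅ : Finset (Fin r)) ∈ K) : ↥(UK K) :=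
  ⟨onesC, ones_mem_UK h⟩

/-- The base point `[1,…,1]` of `X_Σ`. -/
def baseX {n r : ℕ} (N : Fin r → Fin n → ℤ) (K : Set (Finset (Fin r)))
    (h : (∅ : Finset (Fin r)) ∈ K) : XS N K :=
  qmap N K (onesUK h)



/-! ### Spaces of tuples of monic polynomials -/

/-- The monic polynomial `z^d + a_{d-1} z^{d-1} + ⋯ + a_0` with coefficient data `a`. -/
def toPoly {d : ℕ} (a : Fin d → ℂ) : Polynomial ℂ :=
  Polynomial.X ^ d + ∑ i : Fin d, Polynomial.C (a i) * Polynomial.X ^ (i : ℕ)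

/-- The space `Pol*_D(S¹, X_Σ)` of `r`-tuples of monic polynomials of multidegree `D`
(in coefficient coordinates) such that for every `σ ∉ K` the polynomials `{f_i : i ∈ σ}`
have no common real root. -/
def PolSp {r : ℕ} (K : Set (Finset (Fin r))) (D : Fin r → ℕ) :
    Set (∀ k : Fin r, Fin (D k) → ℂ) :=
  {f | ∀ σ : Finset (Fin r), σ ∉ K → ∀ t : ℝ,
        ∃ k ∈ σ, (toPoly (f k)).eval (t : ℂ) ≠ 0}

lemma polEval_mem_UK {r : ℕ} {K : Set (Finset (Fin r))} {D : Fin r → ℕ}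
    (f : ↥(PolSp K D)) (t : ℝ) :
    (fun k => (toPoly (f.1 k)).eval (t : ℂ)) ∈ UK K :=
  mem_UK.2 fun σ hσ => f.2 σ hσ t

/-! ### Loop spaces and induced maps on homotopy groups -/

/-- The loop space `Ω X = Map*(S¹, X)` with `S¹ = ℝ ∪ {∞}` (the one-point
compactification of `ℝ`), based at `x₀`. -/
def Loop (X : Type*) [TopologicalSpace X] (x₀ : X) : Type _ :=
  {γ : C(OnePoint ℝ, X) // γ OnePoint.infty = x₀}

instance {X : Type*} [TopologicalSpace X] (x₀ : X) : TopologicalSpace (Loop X x₀) :=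
  instTopologicalSpaceSubtype

/-- The constant loop, base point of `Ω X`. -/
def Loop.const {X : Type*} [TopologicalSpace X] (x₀ : X) : Loop X x₀ :=
  ⟨ContinuousMap.const _ x₀, rfl⟩

/-- A based continuous map induces a continuous map of loop spaces. -/
def loopMap {X Y : Type*} [TopologicalSpace X] [TopologicalSpace Y] {x₀ : X} {y₀ : Y}
    (f : C(X, Y)) (hf : f x₀ = y₀) : C(Loop X x₀, Loop Y y₀) where
  toFun γ := ⟨f.comp γ.1, by simp [γ.2, hf]⟩
  continuous_toFun := by
    apply Continuous.subtype_mk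
    exact (ContinuousMap.continuous_postcomp f).comp continuous_subtype_val

/-- The map induced by a continuous map on homotopy groups (`π_q`). -/
def piMap (q : ℕ) {X Y : Type*} [TopologicalSpace X] [TopologicalSpace Y]
    (f : C(X, Y)) (x : X) :
    HomotopyGroup (Fin q) X x → HomotopyGroup (Fin q) Y (f x) :=
  Quotient.map
    (fun p => ⟨f.comp p.1, fun y hy => by
      show f (p.1 y) = f x
      rw [p.2 y hy]⟩)
    (fun p₁ p₂ h => h.elim fun H => ⟨H.compContinuousMap f⟩)

/-- `f` is a homotopy equivalence through dimension `d`: it induces isomorphisms on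
`π_k` for all `k ≤ d` (at every base point). -/
def HomotopyEquivThrough {X Y : Type*} [TopologicalSpace X] [TopologicalSpace Y]
    (f : C(X, Y)) (d : ℤ) : Prop :=
  ∀ (x : X) (k : ℕ), (k : ℤ) ≤ d → Function.Bijective (piMap k f x)

/-- A genuine homotopy equivalence. -/
def IsHtpyEquiv {X Y : Type*} [TopologicalSpace X] [TopologicalSpace Y]
    (f : C(X, Y)) : Prop :=
  ∃ g : C(Y, X), (f.comp g).Homotopic (ContinuousMap.id Y) ∧
    (g.comp f).Homotopic (ContinuousMap.id X)

/-! ### `i_D`, lifts, and stabilization maps -/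

/-- `j : Pol*_D → Ω U(K_Σ)` is a lift of `i_D` through `Ω q_Σ`, i.e. `Ω q_Σ ∘ j = i_D`:
for every tuple `f` and real `t`, the loop `j f` at time `t` lies over the point
`[f_1(t), …, f_r(t)]` of `X_Σ` (and at `∞` over `[1,…,1]`, automatically). -/
def IsLiftOfID {n r : ℕ} (N : Fin r → Fin n → ℤ) (K : Set (Finset (Fin r)))
    (hE : (∅ : Finset (Fin r)) ∈ K) (D : Fin r → ℕ)
    (j : ↥(PolSp K D) → Loop ↥(UK K) (onesUK hE)) : Prop :=
  ∀ (f : ↥(PolSp K D)) (t : ℝ),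
    qmap N K ((j f).1 (t : OnePoint ℝ)) =
      qmap N K ⟨fun k => (toPoly (f.1 k)).eval (t : ℂ), polEval_mem_UK f t⟩

/-- `i : Pol*_D → Ω X_Σ` is the map `i_D` given by evaluation. -/
def IsID {n r : ℕ} (N : Fin r → Fin n → ℤ) (K : Set (Finset (Fin r)))
    (hE : (∅ : Finset (Fin r)) ∈ K) (D : Fin r → ℕ)
    (i : ↥(PolSp K D) → Loop (XS N K) (baseX N K hE)) : Prop :=
  ∀ (f : ↥(PolSp K D)) (t : ℝ),
    (i f).1 (t : OnePoint ℝ) =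
      qmap N K ⟨fun k => (toPoly (f.1 k)).eval (t : ℂ), polEval_mem_UK f t⟩

/-- `φ` is an admissible parameter for the stabilization maps: a homeomorphism of `ℂ`
onto the half plane `{Re < bound}` carrying `ℝ` onto `(-∞, bound)`. -/
def AdmissiblePhi (bound : ℝ) (φ : ℂ → ℂ) : Prop :=
  Continuous φ ∧ Function.Injective φ ∧ IsOpenMap φ ∧
    Set.range φ = {w : ℂ | w.re < bound} ∧
    φ '' {z : ℂ | z.im = 0} = {z : ℂ | z.im = 0 ∧ z.re < bound}

/-- The defining property of the stabilization map
`s_{D,D'}(f)_k = φ(f_k) · (z - x_k)^{d'_k - d_k}`, where `φ(f)` denotes the monic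
polynomial whose roots are the images under `φ` of the roots of `f`. -/
def StabSpec {r : ℕ} (K : Set (Finset (Fin r))) (φ : ℂ → ℂ) (xpt : Fin r → ℂ)
    (D D' : Fin r → ℕ) (s : ↥(PolSp K D) → ↥(PolSp K D')) : Prop :=
  ∀ (f : ↥(PolSp K D)) (k : Fin r),
    toPoly ((s f).1 k) =
      (((toPoly (f.1 k)).roots.map φ).map
        fun α => Polynomial.X - Polynomial.C α).prod
        * (Polynomial.X - Polynomial.C (xpt k)) ^ (D' k - D k)

/-- The general defining property of the map `j_D : Pol*_D → Ω U(K_Σ)`: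
when `∑ d_k n_k = 0` it is a lift of `i_D` through `Ω q_Σ`, and otherwise it is the
composite `j_{D₀} ∘ s_{D,D₀}` for a suitable `D₀ = m₀ D*` as in condition (2.9.1). -/
def IsJD {n r : ℕ} (N : Fin r → Fin n → ℤ) (K : Set (Finset (Fin r)))
    (hE : (∅ : Finset (Fin r)) ∈ K) (D : Fin r → ℕ)
    (j : C(↥(PolSp K D), Loop ↥(UK K) (onesUK hE))) : Prop :=
  ((∑ k, (D k : ℤ) • N k = 0) ∧ IsLiftOfID N K hE D j) ∨
  ((∑ k, (D k : ℤ) • N k ≠ 0) ∧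
    ∃ (dstar : Fin r → ℕ) (m₀ : ℕ),
      (∀ k, 0 < dstar k) ∧ (∑ k, (dstar k : ℤ) • N k = 0) ∧
      (∀ k, D k < m₀ * dstar k) ∧
      ∃ (φ : ℂ → ℂ) (xpt : Fin r → ℂ),
        AdmissiblePhi ((∑ k, D k : ℕ) : ℝ) φ ∧
        (∀ k, ((∑ k, D k : ℕ) : ℝ) < (xpt k).re) ∧ Function.Injective xpt ∧
        ∃ (j₀ : C(↥(PolSp K fun k => m₀ * dstar k), Loop ↥(UK K) (onesUK hE)))
          (s₀ : C(↥(PolSp K D), ↥(PolSp K fun k => m₀ * dstar k))),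
          IsLiftOfID N K hE _ j₀ ∧ StabSpec K φ xpt D _ s₀ ∧ j = j₀.comp s₀)

/-! ### Stabilized (colimit) spaces -/

/-- The multidegree `D + t·e`. -/
def Dt {r : ℕ} (D : Fin r → ℕ) (t : ℕ) : Fin r → ℕ := fun k => D k + t

/-- Carrier of the stabilized space: the disjoint union of the `Pol*_{D+te}`. -/
def ColCar {r : ℕ} (K : Set (Finset (Fin r))) (D : Fin r → ℕ) : Type :=
  Σ t : ℕ, ↥(PolSp K (Dt D t))

instance {r : ℕ} (K : Set (Finset (Fin r))) (D : Fin r → ℕ) :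
    TopologicalSpace (ColCar K D) := by
  unfold ColCar; infer_instance

/-- The identifications generating the colimit along the stabilization maps. -/
def ColRel {r : ℕ} (K : Set (Finset (Fin r))) (D : Fin r → ℕ)
    (s : ∀ t : ℕ, ↥(PolSp K (Dt D t)) → ↥(PolSp K (Dt D (t + 1)))) :
    ColCar K D → ColCar K D → Prop :=
  fun a b => b = ⟨a.1 + 1, s a.1 a.2⟩

/-- The stabilized space `Pol^Σ_{D+∞} = colim_t Pol*_{D+te}(S¹, X_Σ)`. -/
def PolColim {r : ℕ} (K : Set (Finset (Fin r))) (D : Fin r → ℕ)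
    (s : ∀ t : ℕ, ↥(PolSp K (Dt D t)) → ↥(PolSp K (Dt D (t + 1)))) : Type :=
  Quot (ColRel K D s)

instance {r : ℕ} (K : Set (Finset (Fin r))) (D : Fin r → ℕ)
    (s : ∀ t : ℕ, ↥(PolSp K (Dt D t)) → ↥(PolSp K (Dt D (t + 1)))) :
    TopologicalSpace (PolColim K D s) :=
  instTopologicalSpaceQuot

/-- Admissibility of a family of stabilization maps `s_{D+te}`. -/
def AdmissibleStabFamily {r : ℕ} (K : Set (Finset (Fin r))) (D : Fin r → ℕ)
    (s : ∀ t : ℕ, ↥(PolSp K (Dt D t)) → ↥(PolSp K (Dt D (t + 1)))) : Prop :=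
  ∀ t : ℕ, ∃ (φ : ℂ → ℂ) (xpt : Fin r → ℂ),
    AdmissiblePhi ((∑ k, Dt D t k : ℕ) : ℝ) φ ∧
    (∀ k, ((∑ k, Dt D t k : ℕ) : ℝ) < (xpt k).re) ∧ Function.Injective xpt ∧
    StabSpec K φ xpt (Dt D t) (Dt D (t + 1)) (s t)


section PartT1

/-! ### Part T: collars of cubes -/

/-- The unit cube. -/
abbrev Cu (m : ℕ) : Type := Fin m → unitInterval

/-- The centred sup norm of a point of the cube. -/
def crad {m : ℕ} (y : Cu m) : ℝ := ‖fun i => 2 * (y i : ℝ) - 1‖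

lemma crad_cont {m : ℕ} : Continuous (crad (m := m)) := by
  unfold crad; fun_prop

lemma crad_nonneg {m : ℕ} (y : Cu m) : 0 ≤ crad y := norm_nonneg _

lemma abs_le_crad {m : ℕ} (y : Cu m) (i : Fin m) : |2 * (y i : ℝ) - 1| ≤ crad y :=
  norm_le_pi_norm (fun i => 2 * (y i : ℝ) - 1) i

lemma crad_le_one {m : ℕ} (y : Cu m) : crad y ≤ 1 := by
  unfold crad
  rw [pi_norm_le_iff_of_nonneg zero_le_one]
  intro i
  have h0 := (y i).2.1
  have h1 := (y i).2.2
  rw [Real.norm_eq_abs, abs_le]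
  constructor <;> linarith

lemma crad_bdry {m : ℕ} {y : Cu m} (hy : y ∈ Cube.boundary (Fin m)) : crad y = 1 := by
  obtain ⟨i, hi⟩ := hy
  refine le_antisymm (crad_le_one y) ?_
  refine le_trans ?_ (abs_le_crad y i)
  rcases hi with h | h <;> rw [h] <;> norm_num

/-- Rescaling of the cube by the factor `1/c`, clamped. -/
def cscale {m : ℕ} (c : ℝ) (y : Cu m) : Cu m := fun i =>
  Set.projIcc (0 : ℝ) 1 zero_le_one (((2 * (y i : ℝ) - 1) / c + 1) / 2)

lemma cscale_one {m : ℕ} (y : Cu m) : cscale 1 y = y := by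
  funext i
  unfold cscale
  have : ((2 * (y i : ℝ) - 1) / 1 + 1) / 2 = (y i : ℝ) := by ring
  rw [this]
  exact Set.projIcc_val zero_le_one (y i)

lemma cscale_bdry {m : ℕ} (y : Cu m) (h : 0 < crad y) :
    cscale (crad y) y ∈ Cube.boundary (Fin m) := by
  have hm : Nonempty (Fin m) := by
    by_contra hc
    rw [not_nonempty_iff] at hc
    have : crad y = 0 := by
      unfold crad
      rw [Subsingleton.elim (fun i => 2 * (y i : ℝ) - 1) 0, norm_zero]
    linarith
  obtain ⟨i, hi⟩ : ∃ i, |2 * (y i : ℝ) - 1| = crad y := by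
    obtain ⟨i, -, hi⟩ := Finset.exists_max_image Finset.univ
      (fun i => |2 * (y i : ℝ) - 1|) Finset.univ_nonempty
    refine ⟨i, le_antisymm (abs_le_crad y i) ?_⟩
    unfold crad
    rw [pi_norm_le_iff_of_nonneg (abs_nonneg _)]
    intro k
    exact hi k (Finset.mem_univ _)
  refine ⟨i, ?_⟩
  unfold cscale
  rcases abs_cases (2 * (y i : ℝ) - 1) with ⟨h1, -⟩ | ⟨h1, -⟩
  · right
    rw [← hi, h1, div_self (by rw [← h1, hi]; exact h.ne')]
    apply Set.projIcc_of_right_le; norm_num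
  · left
    have h2 : (2 * (y i : ℝ) - 1) / crad y = -1 := by
      rw [div_eq_iff h.ne', ← hi, h1]; ring
    rw [h2]
    apply Set.projIcc_of_le_left; norm_num

lemma cscale_cont {m : ℕ} {Z : Type*} [TopologicalSpace Z] {c : Z → ℝ} {y : Z → Cu m}
    (hc : Continuous c) (hy : Continuous y) (h : ∀ z, c z ≠ 0) :
    Continuous (fun z => cscale (c z) (y z)) := by
  refine continuous_pi fun i => ?_
  unfold cscale
  refine continuous_projIcc.comp ?_
  have : Continuous fun z => ((y z i : unitInterval) : ℝ) :=
    continuous_subtype_val.comp ((continuous_apply i).comp hy)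
  exact ((((continuous_const.mul this).sub continuous_const).div hc h).add
    continuous_const).div_const _

/-- real to interval -/
abbrev toI (t : ℝ) : unitInterval := Set.projIcc (0 : ℝ) 1 zero_le_one t

/-- position part of the collar map -/
def cP {m : ℕ} (u : ℝ) (y : Cu m) : Cu m := cscale (max (crad y) (1 - u / 2)) y

lemma cP_cont {m : ℕ} :
    Continuous (fun p : Cu m × unitInterval => cP (p.2 : ℝ) p.1) := by
  unfold cP
  refine cscale_cont ?_ continuous_fst ?_
  · exact (crad_cont.comp continuous_fst).max (by fun_prop)
  · intro p
    have h1 := p.2.2.2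
    have := le_max_right (crad p.1) (1 - (p.2 : ℝ) / 2)
    have : (0 : ℝ) < max (crad p.1) (1 - (p.2 : ℝ) / 2) := by linarith
    exact this.ne'

lemma cP_one_cont {m : ℕ} : Continuous (fun y : Cu m => cP 1 y) := by
  have := (cP_cont (m := m)).comp (Continuous.prodMk continuous_id (continuous_const (y := (1 : unitInterval))))
  simpa [Function.comp_def] using this

lemma cP_bdry {m : ℕ} {u : ℝ} (hu : 0 ≤ u) {y : Cu m} (hy : y ∈ Cube.boundary (Fin m)) :
    cP u y = y := by
  unfold cP
  rw [crad_bdry hy, max_eq_left (by linarith), cscale_one]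

lemma cP_zero {m : ℕ} (y : Cu m) : cP 0 y = y := by
  unfold cP
  rw [max_eq_right (by have := crad_le_one y; linarith)]
  norm_num [cscale_one]

lemma cP_mem {m : ℕ} {y : Cu m} (h : 1 / 2 ≤ crad y) :
    cP 1 y ∈ Cube.boundary (Fin m) := by
  unfold cP
  rw [max_eq_left (by linarith)]
  exact cscale_bdry y (by linarith)

lemma homotopicRel_mk {W Y : Type*} [TopologicalSpace W] [TopologicalSpace Y] {F G : C(W, Y)}
    {S : Set W} (h : unitInterval × W → Y) (hc : Continuous h) (h0 : ∀ y, h (0, y) = F y)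
    (h1 : ∀ y, h (1, y) = G y) (hS : ∀ t, ∀ y ∈ S, h (t, y) = F y) : F.HomotopicRel G S :=
  ⟨⟨⟨⟨h, hc⟩, h0, h1⟩, hS⟩⟩

lemma homotopicWith_mk {W Y : Type*} [TopologicalSpace W] [TopologicalSpace Y] {F G : C(W, Y)}
    {S : Set W} {A : Set Y} (h : unitInterval × W → Y) (hc : Continuous h)
    (h0 : ∀ y, h (0, y) = F y)
    (h1 : ∀ y, h (1, y) = G y) (hS : ∀ t, ∀ y ∈ S, h (t, y) ∈ A) :
    F.HomotopicWith G (fun f => ∀ y ∈ S, f y ∈ A) :=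
  ⟨⟨⟨⟨h, hc⟩, h0, h1⟩, hS⟩⟩

/-- Deformation of pairs: compressing a cube into a subspace relative to its boundary. -/
lemma compress_rel_aux {m : ℕ} {Y : Type*} [TopologicalSpace Y] (A : Set Y) (F : C(Cu m, Y))
    (h : unitInterval × Cu m → Y) (hc : Continuous h)
    (h0 : ∀ y, h (0, y) = F y) (h1 : ∀ y, h (1, y) ∈ A)
    (hS : ∀ t, ∀ y ∈ Cube.boundary (Fin m), h (t, y) ∈ A) :
    ∃ g : C(Cu m, Y), (∀ y, g y ∈ A) ∧ F.HomotopicRel g (Cube.boundary (Fin m)) := by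
  have hcont : Continuous (fun p : unitInterval × Cu m =>
      h (toI (min (p.1 : ℝ) (2 * (1 - crad p.2))), cP (p.1 : ℝ) p.2)) := by
    have e1 : Continuous (fun p : unitInterval × Cu m => (2 * (1 - crad p.2))) :=
      continuous_const.mul (continuous_const.sub (crad_cont.comp continuous_snd))
    have e2 : Continuous (fun p : unitInterval × Cu m => (p.1 : ℝ)) :=
      continuous_subtype_val.comp continuous_fst
    have e3 : Continuous (fun p : unitInterval × Cu m =>
      toI (min (p.1 : ℝ) (2 * (1 - crad p.2)))) := continuous_projIcc.comp (e2.min e1)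
    have e4 : Continuous (fun p : unitInterval × Cu m => cP (p.1 : ℝ) p.2) := by
      have := (cP_cont (m := m)).comp continuous_swap
      simpa only [Function.comp_def, Prod.fst_swap, Prod.snd_swap] using this
    exact hc.comp (e3.prodMk e4)
  refine ⟨⟨fun y => h (toI (min ((1 : unitInterval) : ℝ) (2 * (1 - crad y))),
      cP ((1 : unitInterval) : ℝ) y),
      hcont.comp (Continuous.prodMk (continuous_const (y := (1 : unitInterval))) continuous_id)⟩,
    ?_, homotopicRel_mk _ hcont ?_ (fun y => rfl) ?_⟩
  · intro y
    show h (toI (min ((1 : unitInterval) : ℝ) (2 * (1 - crad y))), cP ((1 : unitInterval) : ℝ) y) ∈ A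
    rcases le_total (crad y) (1 / 2) with h | h
    · have : toI (min ((1 : unitInterval) : ℝ) (2 * (1 - crad y))) = 1 := by
        apply Set.projIcc_of_right_le
        refine le_min (le_refl _) (by linarith)
      rw [this]
      exact h1 _
    · exact hS _ _ (by simpa using cP_mem h)
  · intro y
    have : toI (min ((0 : unitInterval) : ℝ) (2 * (1 - crad y))) = 0 := by
      apply Set.projIcc_of_le_left
      exact min_le_left _ _
    have h2 : cP ((0 : unitInterval) : ℝ) y = y := by simpa using cP_zero y
    simp only [this, h2]
    exact h0 y
  · intro t y hy
    have : toI (min ((t : unitInterval) : ℝ) (2 * (1 - crad y))) = 0 := by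
      apply Set.projIcc_of_le_left
      rw [crad_bdry hy]
      exact (min_le_right _ _).trans (by norm_num)
    simp only [this, cP_bdry t.2.1 hy]
    exact h0 y

lemma compress_rel {m : ℕ} {Y : Type*} [TopologicalSpace Y] (A : Set Y) (F F' : C(Cu m, Y))
    (H : F.HomotopicWith F' (fun f => ∀ y ∈ Cube.boundary (Fin m), f y ∈ A))
    (h1 : ∀ y, F' y ∈ A) :
    ∃ g : C(Cu m, Y), (∀ y, g y ∈ A) ∧ F.HomotopicRel g (Cube.boundary (Fin m)) := by
  obtain ⟨H⟩ := H
  refine compress_rel_aux A F (fun p => H p) H.continuous (fun y => H.apply_zero y)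
    (fun y => ?_) (fun t y hy => H.prop t y hy)
  show H (1, y) ∈ A
  rw [H.apply_one y]
  exact h1 y

/-- The lifting property characterizing highly connected maps. -/
def LP (m : ℕ) {X Y : Type*} [TopologicalSpace X] [TopologicalSpace Y] (s : C(X, Y)) : Prop :=
  ∀ (F : C(Cu m, Y)) (G : C(Cube.boundary (Fin m), X)),
    (∀ y : Cube.boundary (Fin m), F y = s (G y)) →
    ∃ g : C(Cu m, X), (∀ y : Cube.boundary (Fin m), g y = G y) ∧
      (s.comp g).HomotopicRel F (Cube.boundary (Fin m))

lemma LP.comp {m : ℕ} {X Y Z : Type*} [TopologicalSpace X] [TopologicalSpace Y]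
    [TopologicalSpace Z] {s : C(X, Y)} {s' : C(Y, Z)} (h : LP m s) (h' : LP m s') :
    LP m (s'.comp s) := by
  intro F G hFG
  obtain ⟨g', hg', Hsnd⟩ := h' F (s.comp G) hFG
  obtain ⟨g, hg, H⟩ := h g' G hg'
  exact ⟨g, hg, (H.comp_continuousMap s').trans Hsnd⟩

/-- A map with continuous inverse on a compressible image. -/
lemma LP.of_compress {m : ℕ} {X Y : Type*} [TopologicalSpace X] [TopologicalSpace Y]
    (s : C(X, Y)) (A : Set Y) (ρ : C(A, X)) (hsA : ∀ x, s x ∈ A)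
    (hl : ∀ x, ρ ⟨s x, hsA x⟩ = x) (hr : ∀ a : A, s (ρ a) = a)
    (H : ∀ F : C(Cu m, Y), (∀ y ∈ Cube.boundary (Fin m), F y ∈ A) →
      ∃ F' : C(Cu m, Y), (∀ y, F' y ∈ A) ∧
        F.HomotopicWith F' (fun f => ∀ y ∈ Cube.boundary (Fin m), f y ∈ A)) :
    LP m s := by
  intro F G hFG
  obtain ⟨F', hF', hh⟩ := H F (fun y hy => by rw [hFG ⟨y, hy⟩]; exact hsA _)
  obtain ⟨g, hgA, hg⟩ := compress_rel A F F' hh hF'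
  refine ⟨ρ.comp ⟨fun y => ⟨g y, hgA y⟩, g.continuous.subtype_mk _⟩, ?_, ?_⟩
  · intro y
    show ρ ⟨g y, hgA y⟩ = G y
    have : g y = s (G y) := by
      rw [← hFG y]; exact (hg.fst_eq_snd y.2).symm
    rw [← hl (G y)]
    congr 1
    exact Subtype.ext this
  · have : s.comp (ρ.comp ⟨fun y => ⟨g y, hgA y⟩, g.continuous.subtype_mk _⟩) = g := by
      ext y
      exact hr ⟨g y, hgA y⟩
    rw [this]
    exact hg.symm

/-- Gluing a map on the inner cube to a map on a collar. -/
lemma exists_collar_glue {m : ℕ} {Z : Type*} [TopologicalSpace Z] (α : C(Cu m, Z))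
    (β : C(Cube.boundary (Fin m) × unitInterval, Z))
    (h : ∀ y : Cube.boundary (Fin m), β (y, 0) = α y) :
    ∃ γ : C(Cu m, Z), (∀ y, crad y ≤ 1 / 2 → γ y = α (cP 1 y)) ∧
      (∀ y (hy : 1 / 2 ≤ crad y), γ y = β (⟨cP 1 y, cP_mem hy⟩, toI (2 * crad y - 1))) := by
  let f : Cu m → Z := fun y => if hy : 1 / 2 ≤ crad y then
    β (⟨cP 1 y, cP_mem hy⟩, toI (2 * crad y - 1)) else α (cP 1 y)
  have hf1 : ∀ y, crad y ≤ 1 / 2 → f y = α (cP 1 y) := by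
    intro y hy
    by_cases h2 : 1 / 2 ≤ crad y
    · have he : crad y = 1 / 2 := le_antisymm hy h2
      simp only [f, dif_pos h2]
      have : toI (2 * crad y - 1) = 0 := by
        apply Set.projIcc_of_le_left; rw [he]; norm_num
      rw [this]
      exact h _
    · simp only [f, dif_neg h2]
  have hf2 : ∀ y (hy : 1 / 2 ≤ crad y),
      f y = β (⟨cP 1 y, cP_mem hy⟩, toI (2 * crad y - 1)) := by
    intro y hy
    simp only [f, dif_pos hy]
  refine ⟨⟨f, ?_⟩, hf1, hf2⟩
  have c1 : IsClosed {y : Cu m | crad y ≤ 1 / 2} := isClosed_le crad_cont continuous_const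
  have c2 : IsClosed {y : Cu m | 1 / 2 ≤ crad y} := isClosed_le continuous_const crad_cont
  rw [← continuousOn_univ]
  have hu : (Set.univ : Set (Cu m)) = {y : Cu m | crad y ≤ 1 / 2} ∪ {y : Cu m | 1 / 2 ≤ crad y} := by
    ext y; simpa using le_total _ _
  rw [hu]
  refine ContinuousOn.union_of_isClosed ?_ ?_ c1 c2
  · refine ContinuousOn.congr (f := fun y => α (cP 1 y)) ?_ (fun y hy => hf1 y hy)
    exact (α.continuous.comp cP_one_cont).continuousOn
  · rw [continuousOn_iff_continuous_domRestrict]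
    have : Set.domRestrict {y : Cu m | 1 / 2 ≤ crad y} f = fun y =>
        β (⟨cP 1 y.1, cP_mem y.2⟩, toI (2 * crad y.1 - 1)) := by
      funext y
      exact hf2 y.1 y.2
    rw [this]
    refine β.continuous.comp (Continuous.prodMk ?_ ?_)
    · exact (cP_one_cont.comp continuous_subtype_val).subtype_mk _
    · refine continuous_projIcc.comp ?_
      exact (continuous_const.mul (crad_cont.comp continuous_subtype_val)).sub continuous_const

end PartT1

section PartT2

/-- Parametrized gluing. -/
lemma exists_collar_pglue {m : ℕ} {Y : Type*} [TopologicalSpace Y]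
    (α : unitInterval × Cu m → Y) (hα : Continuous α)
    (β : unitInterval × Cube.boundary (Fin m) × unitInterval → Y) (hβ : Continuous β)
    (h : ∀ u, ∀ y : Cube.boundary (Fin m), β (u, y, 0) = α (u, y)) :
    ∃ γ : unitInterval × Cu m → Y, Continuous γ ∧
      (∀ u y, crad y ≤ 1 / 2 → γ (u, y) = α (u, cP 1 y)) ∧
      (∀ u y (hy : 1 / 2 ≤ crad y),
        γ (u, y) = β (u, ⟨cP 1 y, cP_mem hy⟩, toI (2 * crad y - 1))) := by
  let a : C(Cu m, C(unitInterval, Y)) :=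
    ContinuousMap.curry ⟨fun p => α (p.2, p.1), hα.comp continuous_swap⟩
  let b : C(Cube.boundary (Fin m) × unitInterval, C(unitInterval, Y)) :=
    ContinuousMap.curry ⟨fun p => β (p.2, p.1), hβ.comp continuous_swap⟩
  obtain ⟨γ, h1, h2⟩ := exists_collar_glue a b (by
    intro y
    ext u
    exact h u y)
  refine ⟨fun p => γ p.2 p.1, ?_, ?_, ?_⟩
  · exact (ContinuousMap.continuous_uncurry_of_continuous γ).comp continuous_swap
  · intro u y hy
    show γ y u = _
    rw [h1 y hy]
    rfl
  · intro u y hy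
    show γ y u = _
    rw [h2 y hy]
    rfl

lemma toI_bdry {m : ℕ} {y : Cu m} (hy : y ∈ Cube.boundary (Fin m)) :
    toI (2 * crad y - 1) = 1 := by
  apply Set.projIcc_of_right_le
  rw [crad_bdry hy]; norm_num

lemma half_le_bdry {m : ℕ} {y : Cu m} (hy : y ∈ Cube.boundary (Fin m)) : 1 / 2 ≤ crad y := by
  rw [crad_bdry hy]; norm_num

/-- `F ∘ c` is homotopic to `F` relative to the boundary if `c` is a self map of the cube fixing
the boundary. -/
lemma cube_reparam {m : ℕ} {Y : Type*} [TopologicalSpace Y] (F : C(Cu m, Y)) (c : Cu m → Cu m)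
    (hc : Continuous c) (hb : ∀ y ∈ Cube.boundary (Fin m), c y = y) :
    (F.comp ⟨c, hc⟩).HomotopicRel F (Cube.boundary (Fin m)) := by
  refine homotopicRel_mk (fun p => F (fun i =>
    toI ((1 - (p.1 : ℝ)) * (c p.2 i : ℝ) + (p.1 : ℝ) * (p.2 i : ℝ)))) ?_ ?_ ?_ ?_
  · refine F.continuous.comp (continuous_pi fun i => continuous_projIcc.comp ?_)
    have : Continuous fun p : unitInterval × Cu m => (c p.2 i : ℝ) :=
      continuous_subtype_val.comp ((continuous_apply i).comp (hc.comp continuous_snd))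
    fun_prop
  · intro y
    show F _ = F (c y)
    congr 1
    funext i
    simp [toI]
  · intro y
    show F _ = F y
    congr 1
    funext i
    simp [toI]
  · intro t y hy
    show F _ = F (c y)
    congr 1
    funext i
    rw [hb y hy]
    have : (1 - (t : ℝ)) * (y i : ℝ) + (t : ℝ) * (y i : ℝ) = y i := by ring
    simp only [this]
    exact Set.projIcc_val zero_le_one (y i)

/-- The lifting property is invariant under homotopy. -/
lemma LP.of_homotopy {m : ℕ} {X Y : Type*} [TopologicalSpace X] [TopologicalSpace Y]
    {s s' : C(X, Y)} (σ : unitInterval × X → Y) (hσ : Continuous σ) (hσ0 : ∀ x, σ (0, x) = s x)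
    (hσ1 : ∀ x, σ (1, x) = s' x) (h' : LP m s') : LP m s := by
  intro F G hFG
  obtain ⟨F1, cF1, F1i, F1c⟩ := exists_collar_pglue (m := m)
    (fun p : unitInterval × Cu m => F p.2) (by fun_prop)
    (fun p : unitInterval × Cube.boundary (Fin m) × unitInterval =>
      σ (min p.2.2 p.1, G p.2.1))
    (hσ.comp (((continuous_snd.comp continuous_snd).min continuous_fst).prodMk
      (G.continuous.comp (continuous_fst.comp continuous_snd)))) (by
      intro u y
      have : min (0 : unitInterval) u = 0 := min_eq_left u.2.1
      simp only [this, hσ0]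
      exact (hFG y).symm)
  have F1b : ∀ u (y : Cube.boundary (Fin m)), F1 (u, y) = σ (u, G y) := by
    intro u y
    rw [F1c u y (half_le_bdry y.2), toI_bdry y.2]
    have : min (1 : unitInterval) u = u := min_eq_right u.2.2
    simp only [this, cP_bdry zero_le_one y.2]
  have F10 : ∀ y, F1 (0, y) = F (cP 1 y) := by
    intro y
    rcases le_total (crad y) (1 / 2) with h | h
    · exact F1i 0 y h
    · rw [F1c 0 y h]
      have : min (toI (2 * crad y - 1)) (0 : unitInterval) = 0 :=
        min_eq_right (toI (2 * crad y - 1)).2.1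
      simp only [this, hσ0]
      exact (hFG _).symm
  obtain ⟨g1, hg1, ⟨h⟩⟩ := h' ⟨fun y => F1 (1, y), cF1.comp (by fun_prop)⟩ G (by
    intro y
    exact (F1b 1 y).trans (hσ1 _))
  have hh0 : ∀ y, h (0, y) = s' (g1 y) := fun y => h.apply_zero y
  have hh1 : ∀ y, h (1, y) = F1 (1, y) := fun y => h.apply_one y
  have hhb : ∀ t (y : Cube.boundary (Fin m)), h (t, y) = s' (G y) := fun t y =>
    (h.eq_fst t y.2).trans (congrArg s' (hg1 y))
  obtain ⟨W, cW, Wi, Wc⟩ := exists_collar_pglue (m := m) F1 cF1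
    (fun p : unitInterval × Cube.boundary (Fin m) × unitInterval =>
      σ (min (unitInterval.symm p.2.2) p.1, G p.2.1))
    (hσ.comp (((unitInterval.continuous_symm.comp (continuous_snd.comp continuous_snd)).min
      continuous_fst).prodMk
      (G.continuous.comp (continuous_fst.comp continuous_snd)))) (by
      intro u y
      have : min (unitInterval.symm 0) u = u := by
        rw [unitInterval.symm_zero]; exact min_eq_right u.2.2
      simp only [this, F1b])
  obtain ⟨V, cV, Vi, Vc⟩ := exists_collar_pglue (m := m)
    (fun p : unitInterval × Cu m => h (unitInterval.symm p.1, p.2))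
    (h.continuous.comp ((unitInterval.continuous_symm.comp continuous_fst).prodMk continuous_snd))
    (fun p : unitInterval × Cube.boundary (Fin m) × unitInterval =>
      σ (unitInterval.symm p.2.2, G p.2.1))
    (hσ.comp ((unitInterval.continuous_symm.comp (continuous_snd.comp continuous_snd)).prodMk
      (G.continuous.comp (continuous_fst.comp continuous_snd)))) (by
      intro u y
      simp only [unitInterval.symm_zero, hσ1, hhb])
  have hWV : ∀ y, W (1, y) = V (0, y) := by
    intro y
    rcases le_total (crad y) (1 / 2) with hy | hy
    · rw [Wi 1 y hy, Vi 0 y hy]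
      simp only [unitInterval.symm_zero, hh1]
    · rw [Wc 1 y hy, Vc 0 y hy]
      have : ∀ t : unitInterval, min t 1 = t := fun t => min_eq_left t.2.2
      simp only [this]
  have hW0 : ∀ y, W (0, y) = F (cP 1 (cP 1 y)) := by
    intro y
    rcases le_total (crad y) (1 / 2) with hy | hy
    · rw [Wi 0 y hy, F10]
    · rw [Wc 0 y hy]
      have : ∀ t : unitInterval, min t 0 = 0 := fun t => min_eq_right t.2.1
      simp only [this, hσ0]
      rw [cP_bdry zero_le_one (cP_mem hy)]
      exact (hFG _).symm
  have hWb : ∀ u (y : Cube.boundary (Fin m)), W (u, y) = s (G y) := by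
    intro u y
    rw [Wc u y (half_le_bdry y.2), toI_bdry y.2]
    have : min (0 : unitInterval) u = 0 := min_eq_left u.2.1
    simp only [unitInterval.symm_one, this, hσ0, cP_bdry zero_le_one y.2]
  have hVb : ∀ u (y : Cube.boundary (Fin m)), V (u, y) = s (G y) := by
    intro u y
    rw [Vc u y (half_le_bdry y.2), toI_bdry y.2]
    simp only [unitInterval.symm_one, hσ0, cP_bdry zero_le_one y.2]
  have hV1 : ∀ y, V (1, y) = σ (unitInterval.symm (toI (2 * crad y - 1)), g1 (cP 1 y)) := by
    intro y
    rcases le_total (crad y) (1 / 2) with hy | hy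
    · rw [Vi 1 y hy]
      have : toI (2 * crad y - 1) = 0 := by
        apply Set.projIcc_of_le_left; linarith
      simp only [this, unitInterval.symm_one, unitInterval.symm_zero, hσ1, hh0]
    · rw [Vc 1 y hy]
      simp only
      rw [← hg1]
  have cτ : Continuous (fun y : Cu m => toI (2 * crad y - 1)) :=
    continuous_projIcc.comp ((continuous_const.mul crad_cont).sub continuous_const)
  let W0 : C(Cu m, Y) := ⟨fun y => W (0, y), cW.comp (by fun_prop)⟩
  let V0 : C(Cu m, Y) := ⟨fun y => V (0, y), cV.comp (by fun_prop)⟩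
  let V1 : C(Cu m, Y) := ⟨fun y => V (1, y), cV.comp (by fun_prop)⟩
  let g : C(Cu m, X) := g1.comp ⟨fun y => cP 1 y, cP_one_cont⟩
  refine ⟨g, ?_, ?_⟩
  · intro y
    show g1 (cP 1 y) = G y
    rw [cP_bdry zero_le_one y.2, hg1]
  have r1 : W0.HomotopicRel V0 (Cube.boundary (Fin m)) :=
    homotopicRel_mk W cW (fun y => rfl) hWV (fun t y hy =>
      (hWb t ⟨y, hy⟩).trans (hWb 0 ⟨y, hy⟩).symm)
  have r2 : V0.HomotopicRel V1 (Cube.boundary (Fin m)) :=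
    homotopicRel_mk V cV (fun y => rfl) (fun y => rfl) (fun t y hy =>
      (hVb t ⟨y, hy⟩).trans (hVb 0 ⟨y, hy⟩).symm)
  have r3 : (s.comp g).HomotopicRel V1 (Cube.boundary (Fin m)) := by
    refine homotopicRel_mk (fun p => σ (p.1 * unitInterval.symm (toI (2 * crad p.2 - 1)),
      g1 (cP 1 p.2))) ?_ ?_ ?_ ?_
    · refine hσ.comp (Continuous.prodMk (continuous_fst.mul
        (unitInterval.continuous_symm.comp (cτ.comp continuous_snd))) ?_)
      exact g1.continuous.comp (cP_one_cont.comp continuous_snd)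
    · intro y
      simp only [zero_mul, hσ0]; rfl
    · intro y
      simp only [one_mul]
      exact (hV1 y).symm
    · intro t y hy
      simp only [toI_bdry hy, unitInterval.symm_one, mul_zero, hσ0]; rfl
  have r4 : W0.HomotopicRel F (Cube.boundary (Fin m)) := by
    have hcc : Continuous (fun y : Cu m => cP 1 (cP 1 y)) := cP_one_cont.comp cP_one_cont
    have : W0 = F.comp ⟨fun y => cP 1 (cP 1 y), hcc⟩ := by
      ext y; exact hW0 y
    rw [this]
    refine cube_reparam F _ hcc ?_
    intro y hy
    simp only [cP_bdry zero_le_one hy]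
  exact (r3.trans r2.symm).trans (r1.symm.trans r4)

/-- From the lifting property to homotopy groups: surjectivity. -/
lemma piMap_surjective {k : ℕ} {X Y : Type*} [TopologicalSpace X] [TopologicalSpace Y]
    (s : C(X, Y)) (h : LP k s) (x : X) : Function.Surjective (piMap k s x) := by
  intro q
  induction q using Quotient.inductionOn with
  | h F =>
  obtain ⟨g, hg, H⟩ := h F.1 (ContinuousMap.const _ x) (fun y => F.2 y y.2)
  refine ⟨Quotient.mk _ ⟨g, fun y hy => hg ⟨y, hy⟩⟩, ?_⟩
  exact Quotient.sound H

lemma piMap_injective {k : ℕ} {X Y : Type*} [TopologicalSpace X] [TopologicalSpace Y]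
    (s : C(X, Y)) (h : LP (k + 1) s) (x : X) : Function.Injective (piMap k s x) := by
  intro q0 q1 hq
  induction q0 using Quotient.inductionOn with
  | h γ0 =>
  induction q1 using Quotient.inductionOn with
  | h γ1 =>
  obtain ⟨H⟩ := Quotient.exact hq
  have H0 : ∀ y, H (0, y) = s (γ0.1 y) := fun y => H.apply_zero y
  have H1 : ∀ y, H (1, y) = s (γ1.1 y) := fun y => H.apply_one y
  have Hb : ∀ t, ∀ y ∈ Cube.boundary (Fin k), H (t, y) = s x := fun t y hy =>
    (H.eq_fst t hy).trans (congrArg s (γ0.2 y hy))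
  have ct : Continuous (fun z : Cu (k + 1) => (Fin.tail z : Cu k)) :=
    continuous_pi fun i => continuous_apply _
  let half : unitInterval := ⟨1 / 2, by norm_num, by norm_num⟩
  let G : C(Cube.boundary (Fin (k + 1)), X) := ⟨fun z =>
    if (z : Cu (k + 1)) 0 ≤ half then γ0.1 (Fin.tail (z : Cu (k + 1)))
      else γ1.1 (Fin.tail (z : Cu (k + 1))), by
    refine Continuous.if_le (γ0.1.continuous.comp (ct.comp continuous_subtype_val))
      (γ1.1.continuous.comp (ct.comp continuous_subtype_val))
      ((continuous_apply 0).comp continuous_subtype_val) continuous_const ?_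
    rintro ⟨z, i, hi⟩ hz
    have hmem : (Fin.tail z : Cu k) ∈ Cube.boundary (Fin k) := by
      refine Fin.cases (fun h0 => ?_) (fun i h0 => ⟨i, h0⟩) i hi
      exfalso
      have hz' : z 0 = half := hz
      rw [hz'] at h0
      rcases h0 with h0 | h0 <;> (have := congrArg Subtype.val h0; norm_num [half] at this)
    exact (γ0.2 _ hmem).trans (γ1.2 _ hmem).symm⟩
  have hG : ∀ z : Cube.boundary (Fin (k + 1)), H ((z : Cu (k + 1)) 0, Fin.tail (z : Cu (k + 1)))
      = s (G z) := by
    rintro ⟨z, i, hi⟩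
    show H (z 0, Fin.tail z) = s (if z 0 ≤ half then γ0.1 (Fin.tail z) else γ1.1 (Fin.tail z))
    by_cases hm : (Fin.tail z : Cu k) ∈ Cube.boundary (Fin k)
    · rw [Hb _ _ hm]
      split_ifs
      · exact congrArg s (γ0.2 _ hm).symm
      · exact congrArg s (γ1.2 _ hm).symm
    · have h0 : z 0 = 0 ∨ z 0 = 1 := by
        revert hi
        refine Fin.cases (fun h0 => h0) (fun i h0 => (hm ⟨i, h0⟩).elim) i
      rcases h0 with h0 | h0
      · rw [h0, if_pos (show (0 : unitInterval) ≤ half from half.2.1), H0]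
      · rw [h0, if_neg (show ¬ (1 : unitInterval) ≤ half from ?_), H1]
        intro hle
        have : (1 : ℝ) ≤ 1 / 2 := hle
        norm_num at this
  obtain ⟨g, hg, -⟩ := h ⟨fun z : Cu (k + 1) => H (z 0, Fin.tail z),
    H.continuous.comp ((continuous_apply 0).prodMk ct)⟩ G hG
  apply Quotient.sound
  have cc : Continuous (fun p : unitInterval × Cu k => (Fin.cons p.1 p.2 : Cu (k + 1))) := by
    refine continuous_pi (Fin.cases ?_ ?_)
    · exact continuous_fst
    · intro i
      exact (continuous_apply i).comp continuous_snd
  have v0 : ∀ y, g (Fin.cons 0 y : Cu (k + 1)) = γ0.1 y := by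
    intro y
    have hb : (Fin.cons 0 y : Cu (k + 1)) ∈ Cube.boundary (Fin (k + 1)) := ⟨0, Or.inl rfl⟩
    refine (hg ⟨_, hb⟩).trans ?_
    show (if (0 : unitInterval) ≤ half then γ0.1 y else γ1.1 y) = _
    rw [if_pos (show (0 : unitInterval) ≤ half from half.2.1)]
  have v1 : ∀ y, g (Fin.cons 1 y : Cu (k + 1)) = γ1.1 y := by
    intro y
    have hb : (Fin.cons 1 y : Cu (k + 1)) ∈ Cube.boundary (Fin (k + 1)) := ⟨0, Or.inr rfl⟩
    refine (hg ⟨_, hb⟩).trans ?_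
    show (if (1 : unitInterval) ≤ half then γ0.1 y else γ1.1 y) = _
    rw [if_neg (show ¬ (1 : unitInterval) ≤ half from ?_)]
    intro hle
    have : (1 : ℝ) ≤ 1 / 2 := hle
    norm_num at this
  refine homotopicRel_mk (fun p => g (Fin.cons p.1 p.2 : Cu (k + 1))) (g.continuous.comp cc)
    v0 v1 ?_
  intro t y hy
  have hb : (Fin.cons t y : Cu (k + 1)) ∈ Cube.boundary (Fin (k + 1)) := by
    obtain ⟨i, hi⟩ := hy
    exact ⟨i.succ, hi⟩
  refine (hg ⟨_, hb⟩).trans ?_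
  show (if (Fin.cons t y : Cu (k + 1)) 0 ≤ half then γ0.1 y else γ1.1 y) = γ0.1 y
  split_ifs
  · rfl
  · exact (γ1.2 y hy).trans (γ0.2 y hy).symm

end PartT2

section PartP1

open Polynomial

/-! ### Part P: continuous families of polynomials -/

/-- Coefficientwise continuity of a family of polynomials. -/
def CF {X : Type*} [TopologicalSpace X] (p : X → ℂ[X]) : Prop :=
  ∀ n, Continuous fun x => (p x).coeff n

lemma CF.const {X : Type*} [TopologicalSpace X] (p : ℂ[X]) : CF (fun _ : X => p) :=
  fun _ => continuous_const

lemma CF.C {X : Type*} [TopologicalSpace X] {c : X → ℂ} (hc : Continuous c) :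
    CF (fun x => Polynomial.C (c x)) := by
  intro n
  simp only [coeff_C]
  split_ifs
  · exact hc
  · exact continuous_const

lemma CF.add {X : Type*} [TopologicalSpace X] {p q : X → ℂ[X]} (hp : CF p) (hq : CF q) :
    CF (fun x => p x + q x) := by
  intro n
  simp only [coeff_add]
  exact (hp n).add (hq n)

lemma CF.sub {X : Type*} [TopologicalSpace X] {p q : X → ℂ[X]} (hp : CF p) (hq : CF q) :
    CF (fun x => p x - q x) := by
  intro n
  simp only [coeff_sub]
  exact (hp n).sub (hq n)

lemma CF.mul {X : Type*} [TopologicalSpace X] {p q : X → ℂ[X]} (hp : CF p) (hq : CF q) :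
    CF (fun x => p x * q x) := by
  intro n
  simp only [coeff_mul]
  exact continuous_finsetSum _ fun i _ => (hp _).mul (hq _)

lemma CF.pow {X : Type*} [TopologicalSpace X] {p : X → ℂ[X]} (hp : CF p) (k : ℕ) :
    CF (fun x => p x ^ k) := by
  induction k with
  | zero => simpa using CF.const (X := X) 1
  | succ k ih => simpa only [pow_succ] using ih.mul hp

lemma CF.sum {X ι : Type*} [TopologicalSpace X] (s : Finset ι) {p : ι → X → ℂ[X]}
    (hp : ∀ i, CF (p i)) : CF (fun x => ∑ i ∈ s, p i x) := by
  intro n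
  simp only [finsetSum_coeff]
  exact continuous_finsetSum _ fun i _ => hp i n

lemma CF.prod {X ι : Type*} [TopologicalSpace X] (s : Finset ι) {p : ι → X → ℂ[X]}
    (hp : ∀ i, CF (p i)) : CF (fun x => ∏ i ∈ s, p i x) := by
  classical
  induction s using Finset.induction_on with
  | empty => simpa using CF.const (X := X) 1
  | insert a s ha ih => simpa only [Finset.prod_insert ha] using (hp a).mul ih

lemma CF.comp {X Y : Type*} [TopologicalSpace X] [TopologicalSpace Y] {p : X → ℂ[X]} (hp : CF p)
    {f : Y → X} (hf : Continuous f) : CF (fun y => p (f y)) :=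
  fun n => (hp n).comp hf

lemma CF.toPoly {X : Type*} [TopologicalSpace X] {d : ℕ} {a : X → Fin d → ℂ}
    (ha : Continuous a) : CF (fun x => toPoly (a x)) := by
  unfold Toric.toPoly
  refine (CF.const _).add (CF.sum _ fun i => ?_)
  exact (CF.C ((continuous_apply i).comp ha)).mul (CF.const _)

/-- The lower coefficients of a polynomial. -/
def coeffsOf (d : ℕ) (p : ℂ[X]) : Fin d → ℂ := fun i => p.coeff i

lemma CF.coeffsOf {X : Type*} [TopologicalSpace X] {p : X → ℂ[X]} (hp : CF p) (d : ℕ) :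
    Continuous fun x => coeffsOf d (p x) :=
  continuous_pi fun i => hp i

lemma toPoly_coeff_lt {d : ℕ} (a : Fin d → ℂ) (i : Fin d) : (toPoly a).coeff i = a i := by
  unfold toPoly
  rw [coeff_add, coeff_X_pow, if_neg i.2.ne, zero_add, finsetSum_coeff]
  simp only [coeff_C_mul, coeff_X_pow]
  rw [Finset.sum_eq_single i]
  · simp
  · intro b _ hb
    rw [if_neg, mul_zero]
    intro h
    exact hb (Fin.ext h.symm)
  · simp

lemma toPoly_sum_degree {d : ℕ} (a : Fin d → ℂ) :
    (∑ i : Fin d, Polynomial.C (a i) * Polynomial.X ^ (i : ℕ)).degree < (d : WithBot ℕ) := by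
  have := Polynomial.degree_sum_fin_lt a
  simpa using this

lemma toPoly_monic {d : ℕ} (a : Fin d → ℂ) : (toPoly a).Monic :=
  monic_X_pow_add (toPoly_sum_degree a)

lemma toPoly_natDegree {d : ℕ} (a : Fin d → ℂ) : (toPoly a).natDegree = d := by
  have h : (toPoly a).degree = d := by
    unfold toPoly
    rw [degree_add_eq_left_of_degree_lt, degree_X_pow]
    rw [degree_X_pow]
    exact toPoly_sum_degree a
  exact natDegree_eq_of_degree_eq_some h

lemma coeffsOf_toPoly {d : ℕ} (a : Fin d → ℂ) : coeffsOf d (toPoly a) = a :=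
  funext fun i => toPoly_coeff_lt a i

lemma toPoly_inj {d : ℕ} {a b : Fin d → ℂ} (h : toPoly a = toPoly b) : a = b := by
  rw [← coeffsOf_toPoly a, h, coeffsOf_toPoly]

lemma toPoly_coeffsOf {d : ℕ} {p : ℂ[X]} (hp : p.Monic) (hd : p.natDegree = d) :
    toPoly (coeffsOf d p) = p := by
  subst hd
  unfold toPoly coeffsOf
  conv_rhs => rw [hp.as_sum]
  rw [Fin.sum_univ_eq_sum_range (fun i => Polynomial.C (p.coeff i) * Polynomial.X ^ i)]

lemma toPoly_eval {d : ℕ} (a : Fin d → ℂ) (z : ℂ) :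
    (toPoly a).eval z = z ^ d + ∑ i : Fin d, a i * z ^ (i : ℕ) := by
  unfold toPoly
  simp [eval_finsetSum]

lemma toPoly_eval_cont {X : Type*} [TopologicalSpace X] {d : ℕ} {a : X → Fin d → ℂ} {z : X → ℂ}
    (ha : Continuous a) (hz : Continuous z) : Continuous fun x => (toPoly (a x)).eval (z x) := by
  simp only [toPoly_eval]
  fun_prop

/-- Root bound. -/
lemma root_bound {d : ℕ} (a : Fin d → ℂ) (z : ℂ) (h : (toPoly a).eval z = 0) :
    ‖z‖ ≤ 1 + ∑ i, ‖a i‖ := by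
  have hs : 0 ≤ ∑ i, ‖a i‖ := Finset.sum_nonneg fun i _ => norm_nonneg _
  by_contra hc
  push Not at hc
  have hz1 : 1 ≤ ‖z‖ := by linarith
  rw [toPoly_eval] at h
  rcases Nat.eq_zero_or_pos d with hd | hd
  · subst hd
    simp at h
  have h1 : ‖z‖ ^ d ≤ (∑ i, ‖a i‖) * ‖z‖ ^ (d - 1) := by
    have : z ^ d = - ∑ i : Fin d, a i * z ^ (i : ℕ) := eq_neg_of_add_eq_zero_left h
    rw [← norm_pow, this, norm_neg, Finset.sum_mul]
    refine (norm_sum_le _ _).trans (Finset.sum_le_sum fun i _ => ?_)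
    rw [norm_mul, norm_pow]
    refine mul_le_mul_of_nonneg_left (pow_le_pow_right₀ hz1 ?_) (norm_nonneg _)
    have := i.2; omega
  have h2 : ‖z‖ ^ d = ‖z‖ * ‖z‖ ^ (d - 1) := by
    rw [← pow_succ', Nat.sub_add_cancel hd]
  rw [h2] at h1
  have h3 : 0 < ‖z‖ ^ (d - 1) := by positivity
  have := le_of_mul_le_mul_right h1 h3
  linarith

/-- The total coefficient norm. -/
def cnorm {r : ℕ} {D : Fin r → ℕ} (f : ∀ k : Fin r, Fin (D k) → ℂ) : ℝ :=
  1 + ∑ k, ∑ i, ‖f k i‖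

lemma cnorm_cont {r : ℕ} {D : Fin r → ℕ} :
    Continuous (cnorm : (∀ k : Fin r, Fin (D k) → ℂ) → ℝ) := by
  unfold cnorm; fun_prop

lemma root_bound' {r : ℕ} {D : Fin r → ℕ} (f : ∀ k : Fin r, Fin (D k) → ℂ) (k : Fin r) (z : ℂ)
    (h : (toPoly (f k)).eval z = 0) : ‖z‖ ≤ cnorm f := by
  refine (root_bound _ _ h).trans ?_
  unfold cnorm
  have := Finset.single_le_sum (f := fun k => ∑ i, ‖f k i‖)
    (fun k _ => Finset.sum_nonneg fun i _ => norm_nonneg _) (Finset.mem_univ k)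
  linarith

lemma PolSp_isOpen {r : ℕ} {K : Set (Finset (Fin r))} {D : Fin r → ℕ}
    (hK : ∀ σ, σ ∉ K → σ.Nonempty) : IsOpen (PolSp K D) := by
  rw [isOpen_iff_mem_nhds]
  intro f hf
  have h1 : ∀ᶠ g in nhds f, cnorm g < cnorm f + 1 :=
    cnorm_cont.continuousAt.eventually (gt_mem_nhds (by linarith))
  have h2 : ∀ σ : Finset (Fin r), σ ∉ K → ∀ᶠ g in nhds f,
      ∀ t ∈ Set.Icc (-(cnorm f + 1)) (cnorm f + 1),
        ∃ k ∈ σ, (toPoly (g k)).eval ((t : ℝ) : ℂ) ≠ 0 := by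
    intro σ hσ
    refine isCompact_Icc.eventually_forall_of_forall_eventually ?_
    intro t _
    obtain ⟨k, hk, hne⟩ := hf σ hσ t
    have hc : Continuous fun p : (∀ k : Fin r, Fin (D k) → ℂ) × ℝ =>
        (toPoly (p.1 k)).eval ((p.2 : ℝ) : ℂ) :=
      toPoly_eval_cont ((continuous_apply k).comp continuous_fst)
        (Complex.continuous_ofReal.comp continuous_snd)
    have := hc.continuousAt (x := (f, t)) |>.eventually_ne hne
    filter_upwards [this] with p hp
    exact ⟨k, hk, hp⟩
  have h3 : ∀ᶠ g in nhds f, ∀ σ : Finset (Fin r), σ ∉ K →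
      ∀ t ∈ Set.Icc (-(cnorm f + 1)) (cnorm f + 1),
        ∃ k ∈ σ, (toPoly (g k)).eval ((t : ℝ) : ℂ) ≠ 0 := by
    rw [Filter.eventually_all]
    intro σ
    by_cases hσ : σ ∈ K
    · exact Filter.Eventually.of_forall fun g h => (h hσ).elim
    · filter_upwards [h2 σ hσ] with g hg _
      exact hg
  filter_upwards [h1, h3] with g hg1 hg3
  intro σ hσ t
  by_cases ht : t ∈ Set.Icc (-(cnorm f + 1)) (cnorm f + 1)
  · exact hg3 σ hσ t ht
  · obtain ⟨k, hk⟩ := hK σ hσ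
    refine ⟨k, hk, fun h0 => ht ?_⟩
    have := root_bound' g k _ h0
    rw [Complex.norm_real, Real.norm_eq_abs] at this
    exact abs_le.1 (this.trans hg1.le)

/-! ### Continuity of roots -/

/-- The polynomial coefficients with given roots. -/
def rootsToCoeffs (d : ℕ) (α : Fin d → ℂ) : Fin d → ℂ :=
  coeffsOf d (∏ i, (Polynomial.X - Polynomial.C (α i)))

lemma toPoly_rootsToCoeffs {d : ℕ} (α : Fin d → ℂ) :
    toPoly (rootsToCoeffs d α) = ∏ i, (Polynomial.X - Polynomial.C (α i)) := by
  refine toPoly_coeffsOf (monic_prod_of_monic _ _ fun i _ => monic_X_sub_C _) ?_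
  rw [natDegree_prod_of_monic _ _ fun i _ => monic_X_sub_C _]
  simp

lemma rootsToCoeffs_cont (d : ℕ) : Continuous (rootsToCoeffs d) := by
  refine CF.coeffsOf (CF.prod _ fun i => ?_) d
  exact (CF.const _).sub (CF.C (continuous_apply i))

lemma roots_rootsToCoeffs {d : ℕ} (α : Fin d → ℂ) :
    (toPoly (rootsToCoeffs d α)).roots = Finset.univ.val.map α := by
  rw [toPoly_rootsToCoeffs]
  have := Polynomial.roots_multiset_prod_X_sub_C (Finset.univ.val.map α)
  rw [Multiset.map_map] at this
  exact this

lemma rootsToCoeffs_surj (d : ℕ) : Function.Surjective (rootsToCoeffs d) := by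
  intro a
  have hcard : Multiset.card (toPoly a).roots = d := by
    rw [splits_iff_card_roots.1 (IsAlgClosed.splits (toPoly a)), toPoly_natDegree]
  obtain ⟨l, hl⟩ := Quot.exists_rep (toPoly a).roots
  have hl' : (l : Multiset ℂ) = (toPoly a).roots := hl
  have hlen : l.length = d := by rw [← hcard, ← hl']; rfl
  subst hlen
  refine ⟨l.get, toPoly_inj ?_⟩
  rw [toPoly_rootsToCoeffs]
  have h2 := (IsAlgClosed.splits (toPoly a)).eq_prod_roots_of_monic (toPoly_monic a)
  rw [← hl', Multiset.map_coe, Multiset.prod_coe] at h2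
  rw [h2]
  conv_rhs => rw [← List.ofFn_get l]
  rw [List.map_ofFn, List.prod_ofFn]
  rfl

lemma rootsToCoeffs_closed (d : ℕ) : IsClosedMap (rootsToCoeffs d) := by
  have : IsProperMap (rootsToCoeffs d) := by
    rw [isProperMap_iff_tendsto_cocompact]
    refine ⟨rootsToCoeffs_cont d, ?_⟩
    have hb : ∀ α : Fin d → ℂ, ‖α‖ ≤ 1 + ∑ i, ‖rootsToCoeffs d α i‖ := by
      intro α
      have h0 : (0 : ℝ) ≤ 1 + ∑ i, ‖rootsToCoeffs d α i‖ :=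
        add_nonneg zero_le_one (Finset.sum_nonneg fun i _ => norm_nonneg _)
      rw [pi_norm_le_iff_of_nonneg h0]
      intro i
      refine root_bound _ _ ?_
      rw [toPoly_rootsToCoeffs, eval_prod]
      exact Finset.prod_eq_zero (Finset.mem_univ i) (by simp)
    refine Filter.tendsto_cocompact_cocompact_of_norm ?_
    intro ε
    refine ⟨1 + d * |ε|, fun α hα => ?_⟩
    by_contra hc
    push Not at hc
    have h1 : ∑ i, ‖rootsToCoeffs d α i‖ ≤ ∑ _i : Fin d, |ε| :=
      Finset.sum_le_sum fun i _ => (norm_le_pi_norm _ i).trans (hc.trans (le_abs_self ε))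
    simp at h1
    have := hb α
    linarith
  exact this.isClosedMap

/-- Apply a function to the roots. -/
def mapRoots {d : ℕ} (g : ℂ → ℂ) (a : Fin d → ℂ) : Fin d → ℂ :=
  coeffsOf d (((toPoly a).roots.map g).map fun α => Polynomial.X - Polynomial.C α).prod

lemma mapRoots_rootsToCoeffs {d : ℕ} (g : ℂ → ℂ) (α : Fin d → ℂ) :
    mapRoots g (rootsToCoeffs d α) = rootsToCoeffs d (fun i => g (α i)) := by
  unfold mapRoots
  rw [roots_rootsToCoeffs, Multiset.map_map, Multiset.map_map]
  rfl

lemma toPoly_mapRoots {d : ℕ} (g : ℂ → ℂ) (a : Fin d → ℂ) :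
    toPoly (mapRoots g a) =
      (((toPoly a).roots.map g).map fun α => Polynomial.X - Polynomial.C α).prod := by
  obtain ⟨α, rfl⟩ := rootsToCoeffs_surj d a
  rw [mapRoots_rootsToCoeffs, roots_rootsToCoeffs, toPoly_rootsToCoeffs, Multiset.map_map,
    Multiset.map_map]
  rfl

lemma eval_rootsToCoeffs_eq_zero {d : ℕ} (α : Fin d → ℂ) (z : ℂ) :
    (toPoly (rootsToCoeffs d α)).eval z = 0 ↔ ∃ i, α i = z := by
  rw [toPoly_rootsToCoeffs, eval_prod, Finset.prod_eq_zero_iff]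
  simp [sub_eq_zero, eq_comm]

lemma eval_mapRoots_eq_zero {d : ℕ} (g : ℂ → ℂ) (a : Fin d → ℂ) (z : ℂ) :
    (toPoly (mapRoots g a)).eval z = 0 ↔ ∃ w, (toPoly a).eval w = 0 ∧ g w = z := by
  obtain ⟨α, rfl⟩ := rootsToCoeffs_surj d a
  rw [mapRoots_rootsToCoeffs, eval_rootsToCoeffs_eq_zero]
  constructor
  · rintro ⟨i, hi⟩
    exact ⟨α i, (eval_rootsToCoeffs_eq_zero _ _).2 ⟨i, rfl⟩, hi⟩
  · rintro ⟨w, hw, rfl⟩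
    obtain ⟨i, rfl⟩ := (eval_rootsToCoeffs_eq_zero _ _).1 hw
    exact ⟨i, rfl⟩

lemma mapRoots_mapRoots {d : ℕ} (g h : ℂ → ℂ) (a : Fin d → ℂ)
    (hgh : ∀ w, (toPoly a).eval w = 0 → h (g w) = w) : mapRoots h (mapRoots g a) = a := by
  obtain ⟨α, rfl⟩ := rootsToCoeffs_surj d a
  rw [mapRoots_rootsToCoeffs, mapRoots_rootsToCoeffs]
  congr 1
  funext i
  exact hgh _ ((eval_rootsToCoeffs_eq_zero _ _).2 ⟨i, rfl⟩)

lemma mapRoots_continuousOn {d : ℕ} (g : ℂ → ℂ) (U : Set ℂ) (hg : ContinuousOn g U) :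
    ContinuousOn (mapRoots g : (Fin d → ℂ) → (Fin d → ℂ))
      {a | ∀ z, (toPoly a).eval z = 0 → z ∈ U} := by
  set S : Set (Fin d → ℂ) := {a | ∀ z, (toPoly a).eval z = 0 → z ∈ U} with hS
  have hcl := (rootsToCoeffs_closed d).restrictPreimage S
  have hc : Continuous (S.restrictPreimage (rootsToCoeffs d)) :=
    (rootsToCoeffs_cont d).restrictPreimage
  have hsurj : Function.Surjective (S.restrictPreimage (rootsToCoeffs d)) :=
    Set.restrictPreimage_surjective _ (rootsToCoeffs_surj d)
  have hq := hcl.isQuotientMap hc hsurj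
  rw [continuousOn_iff_continuous_domRestrict, hq.continuous_iff]
  have : (S.domRestrict (mapRoots g)) ∘ (S.restrictPreimage (rootsToCoeffs d)) =
      fun α => rootsToCoeffs d (fun i => g (α.1 i)) := by
    funext α
    exact mapRoots_rootsToCoeffs g α.1
  rw [this]
  refine (rootsToCoeffs_cont d).comp (continuous_pi fun i => ?_)
  have hmem : ∀ α : (rootsToCoeffs d) ⁻¹' S, α.1 i ∈ U := fun α =>
    α.2 _ ((eval_rootsToCoeffs_eq_zero _ _).2 ⟨i, rfl⟩)
  exact hg.comp_continuous ((continuous_apply i).comp continuous_subtype_val) hmem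

end PartP1

section PartP2

open Polynomial

/-! ### The map applying `φ` to the roots -/

lemma mapRoots_cont {d : ℕ} (g : ℂ → ℂ) (hg : Continuous g) :
    Continuous (mapRoots g : (Fin d → ℂ) → (Fin d → ℂ)) := by
  have := mapRoots_continuousOn (d := d) g Set.univ hg.continuousOn
  simpa [continuousOn_univ] using this

lemma mapRoots_mem {r : ℕ} {K : Set (Finset (Fin r))} {D : Fin r → ℕ} {N : ℝ} {φ : ℂ → ℂ}
    (hφ : AdmissiblePhi N φ) (hK : ∀ σ, σ ∉ K → σ.Nonempty) (f : ↥(PolSp K D)) :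
    (fun k => mapRoots φ (f.1 k)) ∈ PolSp K D := by
  obtain ⟨hc, hinj, hop, hr, hre⟩ := hφ
  intro σ hσ t
  by_contra hcon
  push Not at hcon
  obtain ⟨k0, hk0⟩ := hK σ hσ
  obtain ⟨w0, -, hw0⟩ := (eval_mapRoots_eq_zero _ _ _).1 (hcon k0 hk0)
  have ht : (t : ℂ) ∈ φ '' {z : ℂ | z.im = 0} := by
    rw [hre]
    refine ⟨Complex.ofReal_im t, ?_⟩
    have : (t : ℂ) ∈ Set.range φ := ⟨w0, hw0⟩
    rw [hr] at this
    exact this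
  obtain ⟨w, hw, hwt⟩ := ht
  obtain ⟨k, hk, hne⟩ := f.2 σ hσ w.re
  obtain ⟨w1, hw1, hw1t⟩ := (eval_mapRoots_eq_zero _ _ _).1 (hcon k hk)
  have : w1 = w := hinj (hw1t.trans hwt.symm)
  subst this
  apply hne
  have : ((w1.re : ℝ) : ℂ) = w1 := Complex.ext (by simp) (by simpa using hw.symm)
  rw [this]
  exact hw1

/-- The map `f ↦ φ(f)`. -/
def PhiMap {r : ℕ} (K : Set (Finset (Fin r))) (D : Fin r → ℕ) {N : ℝ} {φ : ℂ → ℂ}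
    (hφ : AdmissiblePhi N φ) (hK : ∀ σ, σ ∉ K → σ.Nonempty) : C(↥(PolSp K D), ↥(PolSp K D)) where
  toFun f := ⟨fun k => mapRoots φ (f.1 k), mapRoots_mem hφ hK f⟩
  continuous_toFun := by
    refine Continuous.subtype_mk (continuous_pi fun k => ?_) _
    exact (mapRoots_cont φ hφ.1).comp ((continuous_apply k).comp continuous_subtype_val)

/-- translation of polynomials -/
def shiftC {d : ℕ} (c : ℂ) (a : Fin d → ℂ) : Fin d → ℂ :=
  coeffsOf d ((toPoly a).comp (X + C c))

lemma toPoly_shiftC {d : ℕ} (c : ℂ) (a : Fin d → ℂ) :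
    toPoly (shiftC c a) = (toPoly a).comp (X + C c) := by
  refine toPoly_coeffsOf ?_ ?_
  · refine (toPoly_monic a).comp (monic_X_add_C c) ?_
    rw [natDegree_X_add_C]; exact one_ne_zero
  · rw [natDegree_comp, natDegree_X_add_C, mul_one, toPoly_natDegree]

lemma shiftC_eval {d : ℕ} (c : ℂ) (a : Fin d → ℂ) (z : ℂ) :
    (toPoly (shiftC c a)).eval z = (toPoly a).eval (z + c) := by
  rw [toPoly_shiftC, eval_comp]
  simp

lemma shiftC_cont {Z : Type*} [TopologicalSpace Z] {d : ℕ} {c : Z → ℂ} {a : Z → Fin d → ℂ}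
    (hc : Continuous c) (ha : Continuous a) : Continuous fun z => shiftC (c z) (a z) := by
  refine CF.coeffsOf (p := fun z => (toPoly (a z)).comp (X + C (c z))) ?_ d
  have : (fun z => (toPoly (a z)).comp (X + C (c z))) = fun z =>
      (X + C (c z)) ^ d + ∑ i : Fin d, C (a z i) * (X + C (c z)) ^ (i : ℕ) := by
    funext z
    simp [toPoly, Polynomial.sum_comp]
  rw [this]
  have h1 : CF (fun z => (X + C (c z) : ℂ[X])) := (CF.const _).add (CF.C hc)
  refine (h1.pow d).add (CF.sum _ fun i => (CF.C ?_).mul (h1.pow _))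
  exact (continuous_apply i).comp ha

lemma LP_Phi {r m : ℕ} (K : Set (Finset (Fin r))) (D : Fin r → ℕ) {N : ℝ} {φ : ℂ → ℂ}
    (hφ : AdmissiblePhi N φ) (hK : ∀ σ, σ ∉ K → σ.Nonempty) : LP m (PhiMap K D hφ hK) := by
  have hφ' := hφ
  obtain ⟨hc, hinj, hop, hr, hre⟩ := hφ'
  let A : Set ↥(PolSp K D) := {f | ∀ k z, (toPoly (f.1 k)).eval z = 0 → z.re < N}
  let ψ : ℂ → ℂ := Function.invFun φ
  have hψφ : ∀ w, ψ (φ w) = w := Function.leftInverse_invFun hinj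
  have hφψ : ∀ z : ℂ, z.re < N → φ (ψ z) = z := by
    intro z hz
    have : z ∈ Set.range φ := by rw [hr]; exact hz
    obtain ⟨w, rfl⟩ := this
    rw [hψφ]
  have hψc : ContinuousOn ψ {z : ℂ | z.re < N} := by
    rw [← hr, ← Set.image_univ]
    refine IsOpenMap.continuousOn_image_of_leftInvOn ?_ (fun w _ => hψφ w)
    exact hop.domRestrict isOpen_univ
  have hρmem : ∀ a : A, (fun k => mapRoots ψ (a.1.1 k)) ∈ PolSp K D := by
    intro a σ hσ t
    by_contra hcon
    push Not at hcon
    have ht : φ t ∈ {z : ℂ | z.im = 0 ∧ z.re < N} := by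
      rw [← hre]; exact ⟨t, Complex.ofReal_im t, rfl⟩
    obtain ⟨k, hk, hne⟩ := a.1.2 σ hσ (φ t).re
    obtain ⟨w, hw, hwt⟩ := (eval_mapRoots_eq_zero _ _ _).1 (hcon k hk)
    apply hne
    have h1 : φ t = w := by rw [← hwt]; exact hφψ w (a.2 k w hw)
    have h2 : (((φ t).re : ℝ) : ℂ) = φ t := Complex.ext (by simp) (by simpa using ht.1.symm)
    rw [h2, h1]
    exact hw
  let ρ : C(A, ↥(PolSp K D)) := ⟨fun a => ⟨fun k => mapRoots ψ (a.1.1 k), hρmem a⟩, by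
    refine Continuous.subtype_mk (continuous_pi fun k => ?_) _
    refine (mapRoots_continuousOn ψ _ hψc).comp_continuous
      ((continuous_apply k).comp (continuous_subtype_val.comp continuous_subtype_val)) ?_
    intro a z hz
    exact a.2 k z hz⟩
  refine LP.of_compress (PhiMap K D hφ hK) A ρ ?_ ?_ ?_ ?_
  · intro f k z hz
    obtain ⟨w, hw, rfl⟩ := (eval_mapRoots_eq_zero _ _ _).1 hz
    have : φ w ∈ Set.range φ := ⟨w, rfl⟩
    rw [hr] at this
    exact this
  · intro f
    refine Subtype.ext (funext fun k => ?_)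
    exact mapRoots_mapRoots φ ψ (f.1 k) (fun w _ => hψφ w)
  · intro a
    refine Subtype.ext (funext fun k => ?_)
    exact mapRoots_mapRoots ψ φ (a.1.1 k) (fun w hw => hφψ w (a.2 k w hw))
  · intro F hF
    obtain ⟨T, hT⟩ : ∃ T : ℝ, ∀ y, cnorm (F y).1 ≤ T := by
      obtain ⟨T, hT⟩ := (isCompact_range (cnorm_cont.comp
        (continuous_subtype_val.comp F.continuous))).bddAbove
      exact ⟨T, fun y => hT ⟨y, rfl⟩⟩
    have hT0 : 0 ≤ T + |N| + 1 := by
      have h1 : 0 ≤ cnorm (F 0).1 := by unfold cnorm; positivity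
      have := hT 0
      have := abs_nonneg N
      linarith
    have hmem : ∀ p : unitInterval × Cu m,
        (fun k => shiftC (((p.1 : ℝ) * (T + |N| + 1) : ℝ) : ℂ) ((F p.2).1 k)) ∈ PolSp K D := by
      intro p σ hσ t
      obtain ⟨k, hk, hne⟩ := (F p.2).2 σ hσ (t + (p.1 : ℝ) * (T + |N| + 1))
      refine ⟨k, hk, ?_⟩
      rw [shiftC_eval, ← Complex.ofReal_add]
      exact hne
    have hcont : Continuous (fun p : unitInterval × Cu m =>
        (⟨_, hmem p⟩ : ↥(PolSp K D))) := by
      refine Continuous.subtype_mk (continuous_pi fun k => ?_) _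
      refine shiftC_cont ?_ ?_
      · exact Complex.continuous_ofReal.comp
          ((continuous_subtype_val.comp continuous_fst).mul continuous_const)
      · exact (continuous_apply k).comp (continuous_subtype_val.comp
          (F.continuous.comp continuous_snd))
    refine ⟨⟨fun y => ⟨_, hmem (1, y)⟩, hcont.comp (by fun_prop)⟩, ?_,
      homotopicWith_mk _ hcont ?_ (fun y => rfl) ?_⟩
    · intro y k z hz
      have hz' := hz
      change (toPoly (shiftC _ _)).eval z = 0 at hz'
      rw [shiftC_eval] at hz'
      have h1 := root_bound' _ _ _ hz'
      have h2 := hT y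
      have h3 := (Complex.re_le_norm _).trans (h1.trans h2)
      simp at h3
      have := neg_abs_le N
      linarith
    · intro y
      refine Subtype.ext (funext fun k => toPoly_inj ?_)
      show toPoly (shiftC _ _) = _
      rw [toPoly_shiftC]
      simp
    · intro t y hy k z hz
      change (toPoly (shiftC _ _)).eval z = 0 at hz
      rw [shiftC_eval] at hz
      have h1 := hF y hy k _ hz
      have h2 : 0 ≤ (t : ℝ) * (T + |N| + 1) := mul_nonneg t.2.1 hT0
      rw [Complex.add_re, Complex.ofReal_re] at h1
      linarith

/-! ### Multiplication maps -/

/-- Multiply by `(X - x)^(e-d)`. -/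
def mulC {d : ℕ} (e : ℕ) (x : ℂ) (a : Fin d → ℂ) : Fin e → ℂ :=
  coeffsOf e (toPoly a * (X - C x) ^ (e - d))

lemma toPoly_mulC {d e : ℕ} (h : d ≤ e) (x : ℂ) (a : Fin d → ℂ) :
    toPoly (mulC e x a) = toPoly a * (X - C x) ^ (e - d) := by
  refine toPoly_coeffsOf ((toPoly_monic a).mul ((monic_X_sub_C x).pow _)) ?_
  rw [(toPoly_monic a).natDegree_mul ((monic_X_sub_C x).pow _), toPoly_natDegree,
    (monic_X_sub_C x).natDegree_pow, natDegree_X_sub_C]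
  omega

lemma mulC_cont {Z : Type*} [TopologicalSpace Z] {d : ℕ} (e : ℕ) {c : Z → ℂ} {a : Z → Fin d → ℂ}
    (hc : Continuous c) (ha : Continuous a) : Continuous fun z => mulC e (c z) (a z) := by
  refine CF.coeffsOf ?_ e
  exact (CF.toPoly ha).mul (((CF.const _).sub (CF.C hc)).pow _)

lemma mulI_mem {r : ℕ} {K : Set (Finset (Fin r))} {D D' : Fin r → ℕ} (hle : ∀ k, D k ≤ D' k)
    (f : ↥(PolSp K D)) : (fun k => mulC (D' k) Complex.I (f.1 k)) ∈ PolSp K D' := by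
  intro σ hσ t
  obtain ⟨k, hk, hne⟩ := f.2 σ hσ t
  refine ⟨k, hk, ?_⟩
  simp only [toPoly_mulC (hle k), eval_mul, eval_pow, eval_sub, eval_X, eval_C]
  refine mul_ne_zero hne (pow_ne_zero _ fun h => ?_)
  have := congrArg Complex.im h
  simp at this

/-- Multiplication of all components by powers of `X - i`. -/
def iotaMap {r : ℕ} (K : Set (Finset (Fin r))) (D D' : Fin r → ℕ) (hle : ∀ k, D k ≤ D' k) :
    C(↥(PolSp K D), ↥(PolSp K D')) where
  toFun f := ⟨fun k => mulC (D' k) Complex.I (f.1 k), mulI_mem hle f⟩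
  continuous_toFun := by
    refine Continuous.subtype_mk (continuous_pi fun k => ?_) _
    exact mulC_cont (D' k) continuous_const ((continuous_apply k).comp continuous_subtype_val)

lemma LP_s_of_iota {r m : ℕ} (K : Set (Finset (Fin r))) (D D' : Fin r → ℕ)
    (hle : ∀ k, D k ≤ D' k) {N : ℝ} {φ : ℂ → ℂ}
    (hφ : AdmissiblePhi N φ) (hK : ∀ σ, σ ∉ K → 2 ≤ σ.card)
    (xpt : Fin r → ℂ) (hx : ∀ k, N < (xpt k).re) (hxinj : Function.Injective xpt)
    (s : C(↥(PolSp K D), ↥(PolSp K D'))) (hs : StabSpec K φ xpt D D' ⇑s)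
    (hι : LP m (iotaMap K D D' hle)) : LP m s := by
  have hK1 : ∀ σ, σ ∉ K → σ.Nonempty := fun σ hσ => by
    rw [← Finset.card_pos]; have := hK σ hσ; omega
  have hcomp := (LP_Phi (m := m) K D hφ hK1).comp hι
  let T : ℝ := 1 + ∑ k, |(xpt k).im|
  have hT : ∀ k, 0 < (xpt k).im + T := by
    intro k
    have h1 := Finset.single_le_sum (f := fun k => |(xpt k).im|)
      (fun k _ => abs_nonneg _) (Finset.mem_univ k)
    have h2 := neg_abs_le (xpt k).im
    simp only [T]
    linarith
  let lam : ℝ → ℝ := fun u => max 0 (2 * u - 1)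
  let γ : ℝ → Fin r → ℂ := fun u k =>
    (1 - (lam u : ℂ)) * (xpt k + ((T * min 1 (2 * u) : ℝ) : ℂ) * Complex.I) +
      (lam u : ℂ) * Complex.I
  have hγc : ∀ k, Continuous fun u => γ u k := by
    intro k
    simp only [γ, lam]
    fun_prop
  have hγ0 : ∀ k, γ 0 k = xpt k := by
    intro k; simp [γ, lam]
  have hγ1 : ∀ k, γ 1 k = Complex.I := by
    intro k; simp [γ, lam]; norm_num
  have hγim : ∀ u k, (γ u k).im = (1 - lam u) * ((xpt k).im + T * min 1 (2 * u)) + lam u := by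
    intro u k
    simp only [γ, ← Complex.ofReal_one, ← Complex.ofReal_sub, Complex.add_im, 
      Complex.im_ofReal_mul, Complex.I_im]
    ring
  have hgood : ∀ u : ℝ, 0 ≤ u → u ≤ 1 → ∀ k, (γ u k).im = 0 → N < (γ u k).re ∧
      ∀ l, γ u k = γ u l → k = l := by
    intro u hu0 hu1 k hk
    rcases le_total u (1 / 2) with hu | hu
    · have hl : lam u = 0 := max_eq_left (by linarith)
      have hm : min (1 : ℝ) (2 * u) = 2 * u := min_eq_right (by linarith)
      have hγ : ∀ k, γ u k = xpt k + ((T * (2 * u) : ℝ) : ℂ) * Complex.I := by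
        intro k; simp only [γ, hl, hm]; simp
      constructor
      · rw [hγ]
        simp
        exact hx k
      · intro l hkl
        rw [hγ, hγ] at hkl
        exact hxinj (add_right_cancel hkl)
    · exfalso
      have hl : lam u = 2 * u - 1 := max_eq_right (by linarith)
      have hm : min (1 : ℝ) (2 * u) = 1 := min_eq_left (by linarith)
      rw [hγim, hl, hm, mul_one] at hk
      have := hT k
      rcases eq_or_lt_of_le hu with h | h
      · subst h; linarith
      · have : 0 ≤ (1 - (2 * u - 1)) * ((xpt k).im + T) :=
          mul_nonneg (by linarith) this.le
        linarith
  have hmem : ∀ p : unitInterval × ↥(PolSp K D),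
      (fun k => mulC (D' k) (γ p.1 k) (mapRoots φ (p.2.1 k))) ∈ PolSp K D' := by
    rintro ⟨u, f⟩ σ hσ t
    by_contra hcon
    push Not at hcon
    obtain ⟨k, hk, hne⟩ := mapRoots_mem hφ hK1 f σ hσ t
    have hroot : ∀ l, (toPoly (mapRoots φ (f.1 l))).eval (t : ℂ) = 0 → t < N := by
      intro l hl
      obtain ⟨w, -, hw⟩ := (eval_mapRoots_eq_zero _ _ _).1 hl
      have : (t : ℂ) ∈ Set.range φ := ⟨w, hw⟩
      rw [hφ.2.2.2.1] at this
      simpa using this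
    have hzero : ∀ l ∈ σ, (toPoly (mapRoots φ (f.1 l))).eval (t : ℂ) ≠ 0 → γ u l = t := by
      intro l hl hln
      have := hcon l hl
      simp only [toPoly_mulC (hle l), eval_mul, eval_pow, eval_sub, eval_X, eval_C] at this
      rcases mul_eq_zero.1 this with h | h
      · exact (hln h).elim
      · exact (sub_eq_zero.1 (eq_zero_of_pow_eq_zero h)).symm
    have hkt := hzero k hk hne
    obtain ⟨h1, h2⟩ := hgood u u.2.1 u.2.2 k (by rw [hkt]; simp)
    rw [hkt] at h1
    have h1' : N < t := by simpa using h1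
    obtain ⟨a, ha, b, hb, hab⟩ := Finset.one_lt_card.1 (hK σ hσ)
    have key : ∀ l ∈ σ, k = l := by
      intro l hl
      refine h2 l ?_
      rw [hkt]
      refine (hzero l hl fun h0 => ?_).symm
      have := hroot l h0
      linarith
    exact hab ((key a ha).symm.trans (key b hb))
  have hcont : Continuous (fun p : unitInterval × ↥(PolSp K D) =>
      (⟨_, hmem p⟩ : ↥(PolSp K D'))) := by
    refine Continuous.subtype_mk (continuous_pi fun k => ?_) _
    refine mulC_cont (D' k) ?_ ?_
    · exact (hγc k).comp (continuous_subtype_val.comp continuous_fst)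
    · exact (mapRoots_cont φ hφ.1).comp ((continuous_apply k).comp
        (continuous_subtype_val.comp continuous_snd))
  refine LP.of_homotopy _ hcont ?_ ?_ hcomp
  · intro f
    refine Subtype.ext (funext fun k => toPoly_inj ?_)
    rw [hs f k]
    simp only [toPoly_mulC (hle k), toPoly_mapRoots]
    have : γ ((0 : unitInterval) : ℝ) k = xpt k := hγ0 k
    rw [this]
  · intro f
    refine Subtype.ext (funext fun k => ?_)
    have : γ ((1 : unitInterval) : ℝ) k = Complex.I := hγ1 k
    simp only [this]
    rfl

/-- Reduction of the multiplication map to single steps. -/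
lemma LP_iota_of_step {r m : ℕ} (K : Set (Finset (Fin r))) (Q : (Fin r → ℕ) → Prop)
    (hQ : ∀ D E, Q D → (∀ k, D k ≤ E k) → Q E)
    (hstep : ∀ (D E : Fin r → ℕ) (hle : ∀ k, D k ≤ E k) (j : Fin r), Q D → E j = D j + 1 →
      (∀ k, k ≠ j → E k = D k) → LP m (iotaMap K D E hle)) :
    ∀ (n : ℕ) (D D' : Fin r → ℕ) (hle : ∀ k, D k ≤ D' k), Q D → ∑ k, (D' k - D k) = n →
      LP m (iotaMap K D D' hle) := by
  intro n
  induction n with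
  | zero =>
    intro D D' hle hD hsum
    have : D = D' := by
      funext k
      have := (Finset.sum_eq_zero_iff.1 hsum) k (Finset.mem_univ k)
      have := hle k
      omega
    subst this
    have hid : iotaMap K D D hle = ContinuousMap.id _ := by
      refine ContinuousMap.ext fun f => Subtype.ext (funext fun k => toPoly_inj ?_)
      show toPoly (mulC _ _ _) = toPoly (f.1 k)
      rw [toPoly_mulC (le_refl _), Nat.sub_self, pow_zero, mul_one]
    rw [hid]
    intro F G hFG
    exact ⟨F, hFG, ContinuousMap.HomotopicRel.refl _⟩
  | succ n ih =>
    intro D D' hle hD hsum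
    obtain ⟨j, hj⟩ : ∃ j, D' j - D j ≠ 0 := by
      by_contra hc
      push Not at hc
      rw [Finset.sum_eq_zero fun k _ => hc k] at hsum
      omega
    let E : Fin r → ℕ := Function.update D j (D j + 1)
    have hEj : E j = D j + 1 := by simp [E]
    have hEk : ∀ k, k ≠ j → E k = D k := fun k hk => by simp [E, hk]
    have h1 : ∀ k, D k ≤ E k := by
      intro k
      by_cases hk : k = j
      · subst hk; omega
      · rw [hEk k hk]
    have h2 : ∀ k, E k ≤ D' k := by
      intro k
      by_cases hk : k = j
      · subst hk; omega
      · rw [hEk k hk]; exact hle k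
    have hs2 : ∑ k, (D' k - E k) = n := by
      have e1 := Finset.add_sum_erase Finset.univ (fun k => D' k - D k) (Finset.mem_univ j)
      have e2 := Finset.add_sum_erase Finset.univ (fun k => D' k - E k) (Finset.mem_univ j)
      have e3 : ∑ k ∈ Finset.univ.erase j, (D' k - E k) =
          ∑ k ∈ Finset.univ.erase j, (D' k - D k) :=
        Finset.sum_congr rfl fun k hk => by rw [hEk k (Finset.ne_of_mem_erase hk)]
      simp only [hEj] at e1 e2
      omega
    have hc : iotaMap K D D' hle = (iotaMap K E D' h2).comp (iotaMap K D E h1) := by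
      refine ContinuousMap.ext fun f => Subtype.ext (funext fun k => toPoly_inj ?_)
      show toPoly (mulC _ _ _) = toPoly (mulC _ _ (mulC _ _ _))
      rw [toPoly_mulC (hle k), toPoly_mulC (h2 k), toPoly_mulC (h1 k), mul_assoc, ← pow_add]
      congr 2
      have := h1 k; have := h2 k
      omega
    rw [hc]
    exact (hstep D E h1 j hD hEj hEk).comp (ih E D' h2 (hQ D E hD h1) hs2)

end PartP2

section PartP3

open Polynomial Topology

/-! ### Stage 2: the convex homotopy -/

/-- Times where the correction has to be careful. -/
def Bad {r : ℕ} (K : Set (Finset (Fin r))) {E : Fin r → ℕ} (j : Fin r)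
    (f : ∀ k : Fin r, Fin (E k) → ℂ) (t : ℝ) : Prop :=
  ((toPoly (f j)).eval (t : ℂ)).re = 0 ∧
    ∃ τ : Finset (Fin r), j ∉ τ ∧ insert j τ ∉ K ∧ ∀ k ∈ τ, (toPoly (f k)).eval (t : ℂ) = 0

/-- There are fewer than `q` bad times. -/
def Few {r : ℕ} (K : Set (Finset (Fin r))) {E : Fin r → ℕ} (j : Fin r) (q : ℕ)
    (f : ∀ k : Fin r, Fin (E k) → ℂ) : Prop :=
  ¬ ∃ t : Fin q → ℝ, StrictMono t ∧ ∀ i, Bad K j f (t i)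

/-- The real correction function. -/
def rr {n : ℕ} (v : ℂ) (w : Fin n → ℝ) (t : ℝ) : ℝ :=
  v.im - v.re * t + (t ^ 2 + 1) * ∑ i : Fin n, w i * t ^ (i : ℕ)

/-- The correction polynomial. -/
def crr {n : ℕ} (v : ℂ) (w : Fin n → ℝ) : ℂ[X] :=
  C (v.im : ℂ) - C (v.re : ℂ) * X + (X ^ 2 + 1) * ∑ i : Fin n, C (w i : ℂ) * X ^ (i : ℕ)

lemma crr_eval_real {n : ℕ} (v : ℂ) (w : Fin n → ℝ) (t : ℝ) :
    (crr v w).eval (t : ℂ) = (rr v w t : ℂ) := by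
  unfold crr rr
  simp [eval_finsetSum]

lemma crr_eval_I {n : ℕ} (v : ℂ) (w : Fin n → ℝ) :
    (crr v w).eval Complex.I = - Complex.I * v := by
  unfold crr
  simp
  apply Complex.ext <;> simp

lemma crr_degree {d : ℕ} (hd : 1 ≤ d) (v : ℂ) (w : Fin (d - 1) → ℝ) :
    (crr v w).natDegree ≤ d := by
  unfold crr
  refine (natDegree_add_le _ _).trans (max_le ((natDegree_sub_le _ _).trans (max_le ?_ ?_)) ?_)
  · simp
  · refine (natDegree_C_mul_le _ _).trans ?_
    simpa using hd
  · rcases Nat.lt_or_ge d 2 with h | h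
    · have : d = 1 := by omega
      subst this
      simp
    · have h1 : (∑ i : Fin (d - 1), C (w i : ℂ) * X ^ (i : ℕ)).natDegree ≤ d - 2 := by
        refine natDegree_sum_le_of_forall_le _ _ fun i _ => ?_
        refine (natDegree_C_mul_X_pow_le _ _).trans ?_
        have := i.2; omega
      have h2 : (X ^ 2 + 1 : ℂ[X]).natDegree ≤ 2 := by
        refine (natDegree_add_le _ _).trans (max_le ?_ ?_) <;> simp
      refine natDegree_mul_le.trans ?_
      omega

lemma crr_CF {Z : Type*} [TopologicalSpace Z] {n : ℕ} {v : Z → ℂ} {w : Z → Fin n → ℝ}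
    (hv : Continuous v) (hw : Continuous w) : CF (fun z => crr (v z) (w z)) := by
  unfold crr
  refine ((CF.C ?_).sub ((CF.C ?_).mul (CF.const _))).add
    ((CF.const _).mul (CF.sum _ fun i => (CF.C ?_).mul (CF.const _)))
  · fun_prop
  · fun_prop
  · fun_prop

lemma rr_cont {Z : Type*} [TopologicalSpace Z] {n : ℕ} {v : Z → ℂ} {w : Z → Fin n → ℝ} {t : Z → ℝ}
    (hv : Continuous v) (hw : Continuous w) (ht : Continuous t) :
    Continuous (fun z => rr (v z) (w z) (t z)) := by
  unfold rr
  fun_prop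

/-- The corrected tuple. -/
def corr {r : ℕ} {E : Fin r → ℕ} (j : Fin r) {n : ℕ} (f : ∀ k : Fin r, Fin (E k) → ℂ)
    (w : Fin n → ℝ) (l : ℝ) : ∀ k : Fin r, Fin (E k) → ℂ :=
  Function.update f j (coeffsOf (E j) (toPoly (f j) -
    C ((l : ℂ) * Complex.I) * crr ((toPoly (f j)).eval Complex.I) w))

lemma corr_cont {Z : Type*} [TopologicalSpace Z] {r : ℕ} {E : Fin r → ℕ} (j : Fin r) {n : ℕ}
    {f : Z → ∀ k : Fin r, Fin (E k) → ℂ} {w : Z → Fin n → ℝ} {l : Z → ℝ}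
    (hf : Continuous f) (hw : Continuous w) (hl : Continuous l) :
    Continuous (fun z => corr j (f z) (w z) (l z)) := by
  unfold corr
  have hfj : Continuous fun z => f z j := (continuous_apply j).comp hf
  refine hf.update j ?_
  refine CF.coeffsOf ?_ _
  refine (CF.toPoly hfj).sub ((CF.C ?_).mul (crr_CF ?_ hw))
  · fun_prop
  · exact toPoly_eval_cont hfj continuous_const

lemma corr_zero {r : ℕ} {E : Fin r → ℕ} (j : Fin r) {n : ℕ} (f : ∀ k : Fin r, Fin (E k) → ℂ)
    (w : Fin n → ℝ) : corr j f w 0 = f := by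
  unfold corr
  simp [coeffsOf_toPoly]

lemma corr_ne {r : ℕ} {E : Fin r → ℕ} {j : Fin r} {n : ℕ} (f : ∀ k : Fin r, Fin (E k) → ℂ)
    (w : Fin n → ℝ) (l : ℝ) {k : Fin r} (hk : k ≠ j) : corr j f w l k = f k := by
  unfold corr
  simp [hk]

lemma corr_toPoly {r : ℕ} {E : Fin r → ℕ} (j : Fin r) {d : ℕ} (hE : E j = d + 1) (hd : 1 ≤ d)
    (f : ∀ k : Fin r, Fin (E k) → ℂ) (w : Fin (d - 1) → ℝ) (l : ℝ) :
    toPoly (corr j f w l j) = toPoly (f j) -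
      C ((l : ℂ) * Complex.I) * crr ((toPoly (f j)).eval Complex.I) w := by
  unfold corr
  rw [Function.update_self]
  set g := crr ((toPoly (f j)).eval Complex.I) w
  have h1 : (C ((l : ℂ) * Complex.I) * g).degree < (toPoly (f j)).degree := by
    rw [degree_eq_natDegree (toPoly_monic _).ne_zero, toPoly_natDegree, hE]
    refine lt_of_le_of_lt degree_le_natDegree ?_
    have : g.natDegree ≤ d := crr_degree hd ((toPoly (f j)).eval Complex.I) w
    have h2 := natDegree_C_mul_le ((l : ℂ) * Complex.I) g
    exact_mod_cast (by omega : (C ((l : ℂ) * Complex.I) * g).natDegree < d + 1)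
  refine toPoly_coeffsOf ((toPoly_monic _).sub_of_left h1) ?_
  rw [natDegree_sub_eq_left_of_natDegree_lt]
  · exact toPoly_natDegree _
  · rw [toPoly_natDegree, hE]
    have : g.natDegree ≤ d := crr_degree hd ((toPoly (f j)).eval Complex.I) w
    have h2 := natDegree_C_mul_le ((l : ℂ) * Complex.I) g
    omega

lemma corr_eval_I {r : ℕ} {E : Fin r → ℕ} (j : Fin r) {d : ℕ} (hE : E j = d + 1) (hd : 1 ≤ d)
    (f : ∀ k : Fin r, Fin (E k) → ℂ) (w : Fin (d - 1) → ℝ) (l : ℝ) :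
    (toPoly (corr j f w l j)).eval Complex.I = (1 - l) * (toPoly (f j)).eval Complex.I := by
  rw [corr_toPoly j hE hd, eval_sub, eval_mul, eval_C, crr_eval_I]
  linear_combination (l * (toPoly (f j)).eval Complex.I) * Complex.I_mul_I

/-- good correction vectors -/
def goodW {r : ℕ} (K : Set (Finset (Fin r))) {E : Fin r → ℕ} (j : Fin r) (d : ℕ)
    (f : ∀ k : Fin r, Fin (E k) → ℂ) : Set (Fin (d - 1) → ℝ) :=
  {w | ∀ t, Bad K j f t →
    rr ((toPoly (f j)).eval Complex.I) w t * ((toPoly (f j)).eval (t : ℂ)).im < 0}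

lemma corr_mem {r : ℕ} {K : Set (Finset (Fin r))} {E : Fin r → ℕ} (j : Fin r) {d : ℕ}
    (hE : E j = d + 1) (hd : 1 ≤ d)
    (f : ∀ k : Fin r, Fin (E k) → ℂ) (hf : f ∈ PolSp K E) (w : Fin (d - 1) → ℝ)
    (hw : w ∈ goodW K j d f) (l : ℝ) (hl : 0 ≤ l) : corr j f w l ∈ PolSp K E := by
  intro σ hσ t
  by_contra hc
  push Not at hc
  by_cases hj : j ∈ σ
  · have h0 := hc j hj
    rw [corr_toPoly j hE hd, eval_sub, eval_mul, eval_C, crr_eval_real] at h0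
    have hre := congrArg Complex.re h0
    have him := congrArg Complex.im h0
    simp at hre him
    have hbad : Bad K j f t := by
      refine ⟨hre, σ.erase j, by simp, by rwa [Finset.insert_erase hj], fun k hk => ?_⟩
      have := hc k (Finset.mem_of_mem_erase hk)
      rwa [corr_ne _ _ _ (Finset.ne_of_mem_erase hk)] at this
    have := hw t hbad
    have h3 : ((toPoly (f j)).eval (t : ℂ)).im =
      l * rr ((toPoly (f j)).eval Complex.I) w t := by linarith
    rw [h3] at this
    nlinarith [mul_nonneg hl (mul_self_nonneg (rr ((toPoly (f j)).eval Complex.I) w t))]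
  · obtain ⟨k, hk, hne⟩ := hf σ hσ t
    apply hne
    have := hc k hk
    rwa [corr_ne] at this
    rintro rfl
    exact hj hk

lemma goodW_convex {r : ℕ} (K : Set (Finset (Fin r))) {E : Fin r → ℕ} (j : Fin r) (d : ℕ)
    (f : ∀ k : Fin r, Fin (E k) → ℂ) : Convex ℝ (goodW K j d f) := by
  intro w hw w' hw' a b ha hb hab t ht
  have e : rr ((toPoly (f j)).eval Complex.I) (a • w + b • w') t =
      a * rr ((toPoly (f j)).eval Complex.I) w t + b * rr ((toPoly (f j)).eval Complex.I) w' t := by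
    have hs : ∑ i : Fin (d - 1), (a • w + b • w') i * t ^ (i : ℕ)
        = a * ∑ i : Fin (d - 1), w i * t ^ (i : ℕ) + b * ∑ i : Fin (d - 1), w' i * t ^ (i : ℕ) := by
      rw [Finset.mul_sum, Finset.mul_sum, ← Finset.sum_add_distrib]
      refine Finset.sum_congr rfl fun i _ => ?_
      simp
      ring
    unfold rr
    rw [hs]
    obtain rfl : a = 1 - b := by linarith
    ring
  have h1 := hw t ht
  have h2 := hw' t ht
  rw [e]
  set x := rr ((toPoly (f j)).eval Complex.I) w t
  set x' := rr ((toPoly (f j)).eval Complex.I) w' t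
  set u := ((toPoly (f j)).eval (t : ℂ)).im
  have e2 : (a * x + b * x') * u = a * (x * u) + b * (x' * u) := by ring
  rw [e2]
  rcases ha.eq_or_lt with h | h
  · subst h
    have : b = 1 := by linarith
    subst this
    linarith
  · have := mul_neg_of_pos_of_neg h h1
    have := mul_nonpos_of_nonneg_of_nonpos hb h2.le
    linarith

lemma Bad.im_ne {r : ℕ} {K : Set (Finset (Fin r))} {E : Fin r → ℕ} {j : Fin r}
    {f : ∀ k : Fin r, Fin (E k) → ℂ} (hf : f ∈ PolSp K E) {t : ℝ} (h : Bad K j f t) :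
    ((toPoly (f j)).eval (t : ℂ)).im ≠ 0 := by
  intro h0
  obtain ⟨hre, τ, -, hτ, hz⟩ := h
  obtain ⟨k, hk, hne⟩ := hf _ hτ t
  apply hne
  rcases Finset.mem_insert.1 hk with rfl | hk
  · exact Complex.ext hre h0
  · exact hz k hk

lemma Few.finite {r : ℕ} {K : Set (Finset (Fin r))} {E : Fin r → ℕ} {j : Fin r} {q : ℕ}
    {f : ∀ k : Fin r, Fin (E k) → ℂ} (h : Few K j q f) :
    ∃ B : Finset ℝ, B.card < q ∧ ∀ t, Bad K j f t → t ∈ B := by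
  have key : ∀ B : Finset ℝ, (∀ t ∈ B, Bad K j f t) → B.card < q := by
    intro B hB
    by_contra hc
    push Not at hc
    obtain ⟨B', hB', hcard⟩ := Finset.exists_subset_card_eq hc
    exact h ⟨B'.orderEmbOfFin hcard, (B'.orderEmbOfFin hcard).strictMono,
      fun i => hB _ (hB' (Finset.orderEmbOfFin_mem _ _ _))⟩
  have hfin : {t | Bad K j f t}.Finite := by
    by_contra hinf
    obtain ⟨B, hB, hc⟩ := Set.Infinite.exists_subset_card_eq hinf q
    have := key B (fun t ht => hB ht)
    omega
  exact ⟨hfin.toFinset, key _ (fun t ht => by simpa using ht), fun t ht => by simpa using ht⟩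

lemma goodW_nonempty {r : ℕ} {K : Set (Finset (Fin r))} {E : Fin r → ℕ} {j : Fin r} {q d : ℕ}
    (hqd : q ≤ d) {f : ∀ k : Fin r, Fin (E k) → ℂ} (hf : f ∈ PolSp K E) (h : Few K j q f) :
    (goodW K j d f).Nonempty := by
  obtain ⟨B, hBc, hB⟩ := h.finite
  set v := (toPoly (f j)).eval Complex.I
  set val : ℝ → ℝ := fun t =>
    (- ((toPoly (f j)).eval (t : ℂ)).im - (v.im - v.re * t)) / (t ^ 2 + 1)
  set p : ℝ[X] := Lagrange.interpolate B id val
  have hdeg : p.degree < ((d - 1 : ℕ) : WithBot ℕ) := by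
    refine (Lagrange.degree_interpolate_lt _ Function.injective_id.injOn).trans_le ?_
    exact_mod_cast (by omega : B.card ≤ d - 1)
  refine ⟨fun i => p.coeff i, fun t ht => ?_⟩
  have hev : ∑ i : Fin (d - 1), p.coeff i * t ^ (i : ℕ) = val t := by
    rw [Fin.sum_univ_eq_sum_range (fun i => p.coeff i * t ^ i)]
    rw [← Lagrange.eval_interpolate_at_node (v := id) val Function.injective_id.injOn (hB t ht)]
    show _ = p.eval t
    by_cases hp : p = 0
    · simp [hp]
    · rw [eval_eq_sum_range' ((natDegree_lt_iff_degree_lt hp).2 hdeg)]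
  unfold rr
  rw [hev]
  have hne := ht.im_ne hf
  have hpos : t ^ 2 + 1 ≠ 0 := by positivity
  simp only [val]
  rw [mul_div_cancel₀ _ hpos]
  have := mul_self_pos.2 hne
  ring_nf
  nlinarith

lemma isClosed_bad {Z : Type*} [TopologicalSpace Z] {r : ℕ} (K : Set (Finset (Fin r)))
    {E : Fin r → ℕ} (j : Fin r) {f : Z → ∀ k : Fin r, Fin (E k) → ℂ} {t : Z → ℝ}
    (hf : Continuous f) (ht : Continuous t) : IsClosed {z | Bad K j (f z) (t z)} := by
  have hev : ∀ k, Continuous fun z => (toPoly (f z k)).eval (t z : ℂ) := fun k =>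
    toPoly_eval_cont ((continuous_apply k).comp hf) (Complex.continuous_ofReal.comp ht)
  have e : {z | Bad K j (f z) (t z)} = {z | ((toPoly (f z j)).eval (t z : ℂ)).re = 0} ∩
      ⋃ τ : {τ : Finset (Fin r) // j ∉ τ ∧ insert j τ ∉ K},
        ⋂ k ∈ τ.1, {z | (toPoly (f z k)).eval (t z : ℂ) = 0} := by
    ext z
    simp [Bad, and_assoc]
  rw [e]
  refine (isClosed_eq (Complex.continuous_re.comp (hev j)) continuous_const).inter ?_
  refine isClosed_iUnion_of_finite fun τ => ?_
  exact isClosed_biInter fun k _ => isClosed_eq (hev k) continuous_const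

lemma goodW_local {Z : Type*} [TopologicalSpace Z] {r : ℕ} {K : Set (Finset (Fin r))}
    (hK : ∀ σ, σ ∉ K → 2 ≤ σ.card)
    {E : Fin r → ℕ} (j : Fin r) {d : ℕ} {f : Z → ∀ k : Fin r, Fin (E k) → ℂ}
    (hf : Continuous f) (z₀ : Z) (w : Fin (d - 1) → ℝ) (hw : w ∈ goodW K j d (f z₀)) :
    ∀ᶠ z in 𝓝 z₀, w ∈ goodW K j d (f z) := by
  set R := cnorm (f z₀) + 1
  have hR : ∀ᶠ z in 𝓝 z₀, cnorm (f z) < R :=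
    (cnorm_cont.comp hf).continuousAt.eventually_lt continuousAt_const (by simp [R])
  have hfj : Continuous fun z => f z j := (continuous_apply j).comp hf
  have h1 : ∀ᶠ z in 𝓝 z₀, ∀ t ∈ Set.Icc (-R) R, Bad K j (f z) t →
      rr ((toPoly (f z j)).eval Complex.I) w t * ((toPoly (f z j)).eval (t : ℂ)).im < 0 := by
    refine isCompact_Icc.eventually_forall_of_forall_eventually fun t _ => ?_
    have hcl : IsClosed ({p : Z × ℝ | Bad K j (f p.1) p.2} ∩
        {p : Z × ℝ | 0 ≤ rr ((toPoly (f p.1 j)).eval Complex.I) w p.2 *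
          ((toPoly (f p.1 j)).eval (p.2 : ℂ)).im}) := by
      refine (isClosed_bad K j (hf.comp continuous_fst) continuous_snd).inter
        (isClosed_le continuous_const ?_)
      have a1 : Continuous fun p : Z × ℝ => f p.1 j := hfj.comp continuous_fst
      have a2 : Continuous fun p : Z × ℝ => (p.2 : ℂ) := Complex.continuous_ofReal.comp continuous_snd
      refine (rr_cont (toPoly_eval_cont a1 continuous_const) continuous_const
        continuous_snd).mul ?_
      exact Complex.continuous_im.comp (toPoly_eval_cont a1 a2)
    have hmem : (z₀, t) ∈ ({p : Z × ℝ | Bad K j (f p.1) p.2} ∩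
        {p : Z × ℝ | 0 ≤ rr ((toPoly (f p.1 j)).eval Complex.I) w p.2 *
          ((toPoly (f p.1 j)).eval (p.2 : ℂ)).im})ᶜ := by
      rintro ⟨hb, hn⟩
      exact absurd (hw t hb) (not_lt.2 hn)
    filter_upwards [hcl.isOpen_compl.mem_nhds hmem] with p hp hb
    by_contra hc
    exact hp ⟨hb, not_lt.1 hc⟩
  filter_upwards [hR, h1] with z hz1 hz2 t hb
  refine hz2 t ?_ hb
  obtain ⟨-, τ, hj, hτ, hz⟩ := id hb
  have hτne : τ.Nonempty := by
    rw [Finset.nonempty_iff_ne_empty]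
    rintro rfl
    have := hK _ hτ
    simp at this
  obtain ⟨k, hk⟩ := hτne
  have := root_bound' (f z) k t (hz k hk)
  rw [Complex.norm_real, Real.norm_eq_abs] at this
  exact abs_le.1 (this.trans hz1.le)

/-- The subspace of tuples with `f_j(I) = 0`. -/
def AI {r : ℕ} (K : Set (Finset (Fin r))) (E : Fin r → ℕ) (j : Fin r) : Set (PolSp K E) :=
  {f | (toPoly (f.1 j)).eval Complex.I = 0}

lemma stage2 {r m : ℕ} {K : Set (Finset (Fin r))} (hK : ∀ σ, σ ∉ K → 2 ≤ σ.card)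
    {E : Fin r → ℕ} (j : Fin r) {d q : ℕ} (hE : E j = d + 1) (hq : 1 ≤ q) (hqd : q ≤ d)
    (F : C(Cu m, PolSp K E)) (hF : ∀ y, Few K j q (F y).1)
    (hb : ∀ y ∈ Cube.boundary (Fin m), F y ∈ AI K E j) :
    ∃ F' : C(Cu m, PolSp K E), (∀ y, F' y ∈ AI K E j) ∧
      F.HomotopicWith F' (fun f => ∀ y ∈ Cube.boundary (Fin m), f y ∈ AI K E j) := by
  have hd : 1 ≤ d := hq.trans hqd
  have hFc : Continuous fun y => (F y).1 := continuous_subtype_val.comp F.continuous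
  obtain ⟨w, hw⟩ := exists_continuous_forall_mem_convex_of_local_const
    (t := fun y => goodW K j d (F y).1) (fun y => goodW_convex K j d _)
    (fun y => by
      obtain ⟨w, hw⟩ := goodW_nonempty hqd (F y).2 (hF y)
      exact ⟨w, goodW_local hK j hFc y w hw⟩)
  refine ⟨⟨fun y => ⟨corr j (F y).1 (w y) 1, corr_mem j hE hd _ (F y).2 _ (hw y) _ zero_le_one⟩,
    (corr_cont j hFc w.continuous continuous_const).subtype_mk _⟩, fun y => ?_, ?_⟩
  · show (toPoly (corr j (F y).1 (w y) 1 j)).eval Complex.I = 0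
    rw [corr_eval_I j hE hd]
    simp
  · refine homotopicWith_mk
      (fun p => ⟨corr j (F p.2).1 (w p.2) p.1.1,
        corr_mem j hE hd _ (F p.2).2 _ (hw p.2) _ p.1.2.1⟩) ?_ ?_ ?_ ?_
    · refine Continuous.subtype_mk ?_ _
      exact corr_cont j (hFc.comp continuous_snd) (w.continuous.comp continuous_snd)
        (continuous_subtype_val.comp continuous_fst)
    · intro y
      apply Subtype.ext
      exact corr_zero j _ _
    · intro y
      rfl
    · intro t y hy
      show (toPoly (corr j (F y).1 (w y) t.1 j)).eval Complex.I = 0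
      rw [corr_eval_I j hE hd]
      have : (toPoly ((F y).1 j)).eval Complex.I = 0 := hb y hy
      rw [this, mul_zero]

end PartP3

section PartP4

open Polynomial Topology

/-! ### Stage 1: generic perturbations -/

/-- Low degree polynomial with given coefficients. -/
def lowP {d : ℕ} (a : Fin d → ℂ) : ℂ[X] := ∑ i : Fin d, C (a i) * X ^ (i : ℕ)

lemma lowP_degree {d : ℕ} (a : Fin d → ℂ) : (lowP a).degree < (d : WithBot ℕ) :=
  toPoly_sum_degree a

lemma toPoly_eq_lowP {d : ℕ} (a : Fin d → ℂ) : toPoly a = X ^ d + lowP a := rfl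

lemma coeffsOf_lowP {d : ℕ} (a : Fin d → ℂ) : coeffsOf d (lowP a) = a := by
  funext i
  have h := toPoly_coeff_lt a i
  rw [toPoly_eq_lowP, coeff_add, coeff_X_pow, if_neg i.2.ne, zero_add] at h
  exact h

lemma lowP_coeffsOf {d : ℕ} {p : ℂ[X]} (hp : p.degree < (d : WithBot ℕ)) :
    lowP (coeffsOf d p) = p := by
  unfold lowP coeffsOf
  rw [Fin.sum_univ_eq_sum_range (fun i => C (p.coeff i) * X ^ i)]
  by_cases h : p = 0
  · simp [h]
  · exact (as_sum_range_C_mul_X_pow' p ((natDegree_lt_iff_degree_lt h).2 hp)).symm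

lemma lowP_add {d : ℕ} (a b : Fin d → ℂ) : lowP (a + b) = lowP a + lowP b := by
  unfold lowP
  simp [add_mul, Finset.sum_add_distrib]

lemma toPoly_add_coeffsOf {d : ℕ} (a : Fin d → ℂ) {p : ℂ[X]} (hp : p.degree < (d : WithBot ℕ)) :
    toPoly (a + coeffsOf d p) = toPoly a + p := by
  rw [toPoly_eq_lowP, lowP_add, lowP_coeffsOf hp, toPoly_eq_lowP, add_assoc]

lemma interp_decomp {q d : ℕ} (t : Fin q → ℂ) (ht : Function.Injective t)
    (a : Fin d → ℂ) : ∃ h : Fin (d - q) → ℂ,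
    lowP a = Lagrange.interpolate Finset.univ t (fun i => (lowP a).eval (t i)) +
      Lagrange.nodal Finset.univ t * lowP h := by
  set N := Lagrange.nodal Finset.univ t
  set Q := lowP a
  have hN : N.Monic := Lagrange.nodal_monic
  have hNd : N.natDegree = q := by
    simp [N, Lagrange.natDegree_nodal]
  have hNdeg : N.degree = q := by
    simp [N, Lagrange.degree_nodal]
  have h1 : (Q /ₘ N).degree < ((d - q : ℕ) : WithBot ℕ) := by
    by_cases h0 : Q /ₘ N = 0
    · rw [h0, degree_zero]
      exact WithBot.bot_lt_coe _
    · have hQ0 : Q ≠ 0 := by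
        rintro h
        rw [h] at h0
        simp at h0
      have hge : N.degree ≤ Q.degree := by
        by_contra hc
        exact h0 ((divByMonic_eq_zero_iff hN).2 (not_le.1 hc))
      rw [← natDegree_lt_iff_degree_lt h0, natDegree_divByMonic _ hN, hNd]
      have hQd : Q.natDegree < d := (natDegree_lt_iff_degree_lt hQ0).2 (lowP_degree a)
      have : q ≤ Q.natDegree := by
        rw [← hNd]; exact natDegree_le_natDegree hge
      omega
  refine ⟨coeffsOf (d - q) (Q /ₘ N), ?_⟩
  rw [lowP_coeffsOf h1]
  have h2 : Q %ₘ N = Lagrange.interpolate Finset.univ t (fun i => Q.eval (t i)) := by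
    refine Lagrange.eq_interpolate_of_eval_eq _ ht.injOn ?_ ?_
    · have := degree_modByMonic_lt Q hN
      rw [hNdeg] at this
      simpa using this
    · intro i _
      have := congrArg (eval (t i)) (modByMonic_add_div Q N)
      rw [eval_add, eval_mul, Lagrange.eval_nodal_at_node (Finset.mem_univ i), zero_mul,
        add_zero] at this
      exact this
  rw [← h2, modByMonic_add_div Q N]

/-- Coefficientwise smoothness of families of polynomials. -/
def SF {P : Type*} [NormedAddCommGroup P] [NormedSpace ℝ P] (S : Set P) (p : P → ℂ[X]) : Prop :=
  ∀ n, ContDiffOn ℝ 1 (fun x => (p x).coeff n) S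

section SF
variable {P : Type*} [NormedAddCommGroup P] [NormedSpace ℝ P] {S : Set P}

lemma SF.const (p : ℂ[X]) : SF S (fun _ : P => p) := fun _ => contDiffOn_const

lemma SF.C {c : P → ℂ} (hc : ContDiffOn ℝ 1 c S) : SF S (fun x => Polynomial.C (c x)) := by
  intro n
  simp only [coeff_C]
  split_ifs
  · exact hc
  · exact contDiffOn_const

lemma SF.add {p q : P → ℂ[X]} (hp : SF S p) (hq : SF S q) : SF S (fun x => p x + q x) := by
  intro n
  simp only [coeff_add]
  exact (hp n).add (hq n)

lemma SF.sub {p q : P → ℂ[X]} (hp : SF S p) (hq : SF S q) : SF S (fun x => p x - q x) := by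
  intro n
  simp only [coeff_sub]
  exact (hp n).sub (hq n)

lemma SF.mul {p q : P → ℂ[X]} (hp : SF S p) (hq : SF S q) : SF S (fun x => p x * q x) := by
  intro n
  simp only [coeff_mul]
  exact ContDiffOn.sum fun i _ => (hp _).mul (hq _)

lemma SF.sum {ι : Type*} (s : Finset ι) {p : ι → P → ℂ[X]}
    (hp : ∀ i ∈ s, SF S (p i)) : SF S (fun x => ∑ i ∈ s, p i x) := by
  intro n
  simp only [finsetSum_coeff]
  exact ContDiffOn.sum fun i hi => hp i hi n

lemma SF.prod {ι : Type*} (s : Finset ι) {p : ι → P → ℂ[X]}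
    (hp : ∀ i ∈ s, SF S (p i)) : SF S (fun x => ∏ i ∈ s, p i x) := by
  classical
  induction s using Finset.induction_on with
  | empty => simpa using SF.const (S := S) 1
  | insert a s ha ih =>
    simp only [Finset.prod_insert ha]
    exact (hp a (by simp)).mul (ih fun i hi => hp i (by simp [hi]))

lemma SF.lowP {d : ℕ} {a : P → Fin d → ℂ} (ha : ∀ i, ContDiffOn ℝ 1 (fun x => a x i) S) :
    SF S (fun x => lowP (a x)) := by
  unfold Toric.lowP
  exact SF.sum _ fun i _ => (SF.C (ha i)).mul (SF.const _)

lemma SF.nodal {q : ℕ} {t : P → Fin q → ℂ} (ht : ∀ i, ContDiffOn ℝ 1 (fun x => t x i) S) :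
    SF S (fun x => Lagrange.nodal Finset.univ (t x)) := by
  unfold Lagrange.nodal
  exact SF.prod _ fun i _ => (SF.const _).sub (SF.C (ht i))

lemma SF.interpolate {q : ℕ} {t : P → Fin q → ℂ} {v : P → Fin q → ℂ}
    (ht : ∀ i, ContDiffOn ℝ 1 (fun x => t x i) S)
    (hv : ∀ i, ContDiffOn ℝ 1 (fun x => v x i) S)
    (hinj : ∀ x ∈ S, Function.Injective (t x)) :
    SF S (fun x => Lagrange.interpolate Finset.univ (t x) (v x)) := by
  simp only [Lagrange.interpolate_apply, Lagrange.basis, Lagrange.basisDivisor]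
  refine SF.sum _ fun i _ => (SF.C (hv i)).mul (SF.prod _ fun i' hi' => ?_)
  refine (SF.C ?_).mul ((SF.const _).sub (SF.C (ht i')))
  refine ContDiffOn.inv ((ht i).sub (ht i')) fun x hx => ?_
  rw [sub_ne_zero]
  exact fun h => (Finset.ne_of_mem_erase hi') ((hinj x hx h).symm)

lemma SF.eval {d : ℕ} {a : P → Fin d → ℂ} {z : P → ℂ}
    (ha : ∀ i, ContDiffOn ℝ 1 (fun x => a x i) S) (hz : ContDiffOn ℝ 1 z S) :
    ContDiffOn ℝ 1 (fun x => (toPoly (a x)).eval (z x)) S := by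
  simp only [toPoly_eval]
  exact (hz.pow _).add (ContDiffOn.sum fun i _ => (ha i).mul (hz.pow _))

end SF

/-- The perturbing polynomials. -/
def pertP {r : ℕ} {D : Fin r → ℕ} (j : Fin r) (c : ∀ k : Fin r, Fin (D k) → ℂ) (k : Fin r) :
    ℂ[X] := (if k = j then (X - C Complex.I) else 1) * lowP (c k)

/-- The perturbation vector. -/
def pertL {r : ℕ} {D : Fin r → ℕ} (E : Fin r → ℕ) (j : Fin r)
    (c : ∀ k : Fin r, Fin (D k) → ℂ) : ∀ k : Fin r, Fin (E k) → ℂ :=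
  fun k => coeffsOf (E k) (pertP j c k)

lemma pertP_degree {r : ℕ} {D E : Fin r → ℕ} {j : Fin r} (hEj : E j = D j + 1)
    (hEk : ∀ k, k ≠ j → E k = D k) (c : ∀ k : Fin r, Fin (D k) → ℂ) (k : Fin r) :
    (pertP j c k).degree < (E k : WithBot ℕ) := by
  unfold pertP
  by_cases h : k = j
  · subst h
    rw [if_pos rfl, hEj, degree_mul, degree_X_sub_C, add_comm]
    push_cast
    have := lowP_degree (c k)
    by_cases h0 : lowP (c k) = 0
    · rw [h0]; simp
    · rw [degree_eq_natDegree h0] at this ⊢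
      have h3 : (lowP (c k)).natDegree < D k := by exact_mod_cast this
      exact_mod_cast Nat.add_lt_add_right h3 1
  · rw [if_neg h, one_mul, hEk k h]
    exact lowP_degree _

lemma toPoly_pert {r : ℕ} {D E : Fin r → ℕ} {j : Fin r} (hEj : E j = D j + 1)
    (hEk : ∀ k, k ≠ j → E k = D k) (f : ∀ k : Fin r, Fin (E k) → ℂ)
    (c : ∀ k : Fin r, Fin (D k) → ℂ) (k : Fin r) :
    toPoly ((f + pertL E j c) k) = toPoly (f k) + pertP j c k :=
  toPoly_add_coeffsOf (f k) (pertP_degree hEj hEk c k)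

lemma pertL_cont {r : ℕ} {D : Fin r → ℕ} (E : Fin r → ℕ) (j : Fin r) :
    Continuous (pertL (D := D) E j) := by
  refine continuous_pi fun k => ?_
  unfold pertL pertP
  refine CF.coeffsOf (CF.mul (CF.const _) ?_) _
  unfold lowP
  refine CF.sum _ fun i => (CF.C ?_).mul (CF.const _)
  fun_prop

lemma pertL_zero {r : ℕ} {D : Fin r → ℕ} (E : Fin r → ℕ) (j : Fin r) :
    pertL (D := D) E j 0 = 0 := by
  funext k i
  simp [pertL, pertP, lowP, coeffsOf]

/-- Parameter space. -/
abbrev Par {r : ℕ} (m q : ℕ) (D : Fin r → ℕ) (ι : Fin q → Finset (Fin r)) : Type :=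
  (Fin m → ℝ) × (Fin q → ℝ) × (Fin q → ℝ) ×
    ((Σ i : Fin q, {k : Fin r // k ∉ ι i}) → ℂ) × ((Σ k : Fin r, Fin (D k - q)) → ℂ)

lemma Par_finrank {r : ℕ} (m q : ℕ) (D : Fin r → ℕ) (ι : Fin q → Finset (Fin r)) :
    Module.finrank ℝ (Par m q D ι) =
      m + (q + (q + (2 * ∑ i, (r - (ι i).card) + 2 * ∑ k, (D k - q)))) := by
  have h : ∀ κ : Type, ∀ [Fintype κ], Module.finrank ℝ (κ → ℂ) = 2 * Fintype.card κ := by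
    intro κ _
    rw [Module.finrank_pi_fintype]
    simp [mul_comm]
  rw [Module.finrank_prod, Module.finrank_prod, Module.finrank_prod, Module.finrank_prod, h, h]
  simp only [Module.finrank_fin_fun, Fintype.card_sigma, Fintype.card_fin]
  congr 5
  refine Finset.sum_congr rfl fun i _ => ?_
  simp

lemma Cc_finrank {r : ℕ} (D : Fin r → ℕ) :
    Module.finrank ℝ (∀ k : Fin r, Fin (D k) → ℂ) = 2 * ∑ k, D k := by
  rw [Module.finrank_pi_fintype, Finset.mul_sum]
  refine Finset.sum_congr rfl fun k _ => ?_
  rw [Module.finrank_pi_fintype]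
  simp [mul_comm]

/-- The values prescribed for the perturbation. -/
def pval {r m q : ℕ} {D E : Fin r → ℕ} (j : Fin r) (f : (Fin m → ℝ) → ∀ k : Fin r, Fin (E k) → ℂ)
    (ι : Fin q → Finset (Fin r)) (p : Par m q D ι) (k : Fin r) (i : Fin q) : ℂ :=
  if k = j then
    (-((((toPoly (f p.1 j)).eval (p.2.1 i : ℂ)).re : ℝ) : ℂ) + Complex.I * (p.2.2.1 i : ℂ)) *
      ((p.2.1 i : ℂ) - Complex.I)⁻¹
  else if h : k ∈ ι i then - (toPoly (f p.1 k)).eval (p.2.1 i : ℂ)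
  else p.2.2.2.1 ⟨i, k, h⟩

/-- The parametrization of bad perturbations. -/
def psi {r m q : ℕ} {D E : Fin r → ℕ} (j : Fin r) (f : (Fin m → ℝ) → ∀ k : Fin r, Fin (E k) → ℂ)
    (ι : Fin q → Finset (Fin r)) (p : Par m q D ι) : ∀ k : Fin r, Fin (D k) → ℂ := fun k =>
  coeffsOf (D k) (Lagrange.interpolate Finset.univ (fun i => (p.2.1 i : ℂ)) (pval j f ι p k) +
    Lagrange.nodal Finset.univ (fun i => (p.2.1 i : ℂ)) * lowP fun l => p.2.2.2.2 ⟨k, l⟩)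

/-- Strictly monotone nodes. -/
def ParS {r : ℕ} (m q : ℕ) (D : Fin r → ℕ) (ι : Fin q → Finset (Fin r)) : Set (Par m q D ι) :=
  {p | StrictMono p.2.1}

lemma ParS_convex {r : ℕ} (m q : ℕ) (D : Fin r → ℕ) (ι : Fin q → Finset (Fin r)) :
    Convex ℝ (ParS m q D ι) := by
  intro p hp p' hp' a b ha hb hab i i' hii
  have h1 := hp hii
  have h2 := hp' hii
  show a * p.2.1 i + b * p'.2.1 i < a * p.2.1 i' + b * p'.2.1 i'
  rcases ha.eq_or_lt with h | h
  · subst h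
    have : b = 1 := by linarith
    subst this
    linarith
  · have := mul_lt_mul_of_pos_left h1 h
    have := mul_le_mul_of_nonneg_left h2.le hb
    linarith

lemma psi_contDiffOn {r m q : ℕ} {D E : Fin r → ℕ} (j : Fin r)
    (f : (Fin m → ℝ) → ∀ k : Fin r, Fin (E k) → ℂ) (hf : ContDiff ℝ 1 f)
    (ι : Fin q → Finset (Fin r)) :
    ContDiffOn ℝ 1 (psi (D := D) j f ι) (ParS m q D ι) := by
  have hfc : ∀ k l, ContDiffOn ℝ 1 (fun p : Par m q D ι => f p.1 k l) (ParS m q D ι) := by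
    intro k l
    have h1 : ContDiff ℝ 1 fun y => f y k l := contDiff_pi.1 (contDiff_pi.1 hf k) l
    exact (h1.comp contDiff_fst).contDiffOn
  have ht : ∀ i, ContDiffOn ℝ 1 (fun p : Par m q D ι => (p.2.1 i : ℂ)) (ParS m q D ι) := by
    intro i
    have h1 : ContDiff ℝ 1 fun p : Par m q D ι => p.2.1 i := by fun_prop
    exact (Complex.ofRealCLM.contDiff.comp h1).contDiffOn
  have hb : ∀ i, ContDiffOn ℝ 1 (fun p : Par m q D ι => (p.2.2.1 i : ℂ)) (ParS m q D ι) := by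
    intro i
    have h1 : ContDiff ℝ 1 fun p : Par m q D ι => p.2.2.1 i := by fun_prop
    exact (Complex.ofRealCLM.contDiff.comp h1).contDiffOn
  have hv : ∀ k i, ContDiffOn ℝ 1 (fun p : Par m q D ι => pval j f ι p k i) (ParS m q D ι) := by
    intro k i
    unfold pval
    by_cases h : k = j
    · simp only [if_pos h]
      have he := SF.eval (hfc j) (ht i)
      refine ContDiffOn.mul (ContDiffOn.add (ContDiffOn.neg ?_) (contDiffOn_const.mul (hb i)))
        (ContDiffOn.inv ((ht i).sub contDiffOn_const) ?_)
      · exact Complex.ofRealCLM.contDiff.comp_contDiffOn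
          (Complex.reCLM.contDiff.comp_contDiffOn he)
      · intro p _ h0
        have := congrArg Complex.im h0
        simp at this
    · simp only [if_neg h]
      by_cases h' : k ∈ ι i
      · simp only [dif_pos h']
        exact (SF.eval (hfc k) (ht i)).neg
      · simp only [dif_neg h']
        exact ContDiff.contDiffOn (by fun_prop)
  rw [contDiffOn_pi]
  intro k
  rw [contDiffOn_pi]
  intro n
  have hSF := (SF.interpolate (S := ParS m q D ι) ht (hv k) (fun p hp a b hab => by
      have : p.2.1 a = p.2.1 b := by exact_mod_cast hab
      exact (StrictMono.injective hp) this)).add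
    ((SF.nodal ht).mul (SF.lowP (a := fun (p : Par m q D ι) (l : Fin (D k - q)) =>
      p.2.2.2.2 ⟨k, l⟩) (fun l => ContDiff.contDiffOn (by fun_prop))))
  exact hSF n

lemma bad_subset {r m q : ℕ} {K : Set (Finset (Fin r))} {D E : Fin r → ℕ} {j : Fin r}
    (hEj : E j = D j + 1) (hEk : ∀ k, k ≠ j → E k = D k)
    (f : (Fin m → ℝ) → ∀ k : Fin r, Fin (E k) → ℂ) :
    {c : ∀ k : Fin r, Fin (D k) → ℂ | ∃ y, ¬ Few K j q (f y + pertL E j c)} ⊆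
      ⋃ ι : {ι : Fin q → Finset (Fin r) // ∀ i, ι i ∉ K},
        psi (D := D) j f ι.1 '' ParS m q D ι.1 := by
  rintro c ⟨y, hy⟩
  unfold Few at hy
  push Not at hy
  obtain ⟨t, ht, hbad⟩ := hy
  have hre := fun i => (hbad i).1
  choose τ hj hτ hz using fun i => (hbad i).2
  refine Set.mem_iUnion.2 ⟨⟨fun i => insert j (τ i), hτ⟩, ?_⟩
  have hinj : Function.Injective fun i => (t i : ℂ) := fun a b h =>
    ht.injective (Complex.ofReal_injective h)
  choose h hh using fun k => interp_decomp (fun i => (t i : ℂ)) hinj (c k)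
  refine ⟨(y, t, fun i => (((t i : ℂ) - Complex.I) * (lowP (c j)).eval (t i : ℂ)).im,
    fun s => (lowP (c s.2.1)).eval (t s.1 : ℂ), fun s => h s.1 s.2), ht, ?_⟩
  funext k
  unfold psi
  have hval : pval (D := D) j f (fun i => insert j (τ i))
      (y, t, fun i => (((t i : ℂ) - Complex.I) * (lowP (c j)).eval (t i : ℂ)).im,
    fun s => (lowP (c s.2.1)).eval (t s.1 : ℂ), fun s => h s.1 s.2) k =
      fun i => (lowP (c k)).eval (t i : ℂ) := by
    funext i
    unfold pval
    by_cases hk : k = j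
    · subst hk
      rw [if_pos rfl]
      have h1 := hre i
      rw [toPoly_pert hEj hEk] at h1
      simp only [pertP, if_true, eval_add, eval_mul, eval_sub, eval_X, eval_C, Complex.add_re] at h1
      have hne : (t i : ℂ) - Complex.I ≠ 0 := by
        intro h0
        have := congrArg Complex.im h0
        simp at this
      rw [mul_inv_eq_iff_eq_mul₀ hne]
      apply Complex.ext
      · simp at h1 ⊢
        linarith
      · simp
        ring
    · rw [if_neg hk]
      by_cases hk' : k ∈ insert j (τ i)
      · rw [dif_pos hk']
        have h1 := hz i k ((Finset.mem_insert.1 hk').resolve_left hk)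
        rw [toPoly_pert hEj hEk] at h1
        simp only [pertP, if_neg hk, one_mul, eval_add] at h1
        exact neg_eq_of_add_eq_zero_right h1
      · rw [dif_neg hk']
  rw [hval]
  show coeffsOf (D k) (Lagrange.interpolate Finset.univ (fun i => (t i : ℂ)) _ +
    Lagrange.nodal Finset.univ (fun i => (t i : ℂ)) * lowP (h k)) = c k
  rw [← hh k, coeffsOf_lowP]

lemma dense_few {r m q ρ : ℕ} {K : Set (Finset (Fin r))} (hK : ∀ σ, σ ∉ K → ρ ≤ σ.card)
    {D E : Fin r → ℕ} {j : Fin r}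
    (hEj : E j = D j + 1) (hEk : ∀ k, k ≠ j → E k = D k) (hqD : ∀ k, q ≤ D k)
    (hm : m < 2 * (ρ - 1) * q)
    (f : (Fin m → ℝ) → ∀ k : Fin r, Fin (E k) → ℂ) (hf : ContDiff ℝ 1 f) :
    Dense {c : ∀ k : Fin r, Fin (D k) → ℂ | ∀ y, Few K j q (f y + pertL E j c)} := by
  have hρ : 2 ≤ ρ := by
    by_contra hc
    have : ρ - 1 = 0 := by omega
    simp [this] at hm
  have hq : 1 ≤ q := by
    by_contra hc
    have : q = 0 := by omega
    simp [this] at hm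
  set M := 2 * ∑ k, D k
  have hM : Module.finrank ℝ (∀ k : Fin r, Fin (D k) → ℂ) = M := Cc_finrank D
  have hMpos : 1 ≤ M := by
    have : D j ≤ ∑ k, D k := Finset.single_le_sum (fun k _ => Nat.zero_le _) (Finset.mem_univ j)
    have := hqD j
    omega
  have key : dimH {c : ∀ k : Fin r, Fin (D k) → ℂ | ∃ y, ¬ Few K j q (f y + pertL E j c)}
      ≤ ((M - 1 : ℕ) : ENNReal) := by
    refine (dimH_mono (bad_subset hEj hEk f)).trans ?_
    rw [dimH_iUnion]
    refine iSup_le fun ι => ?_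
    refine ((psi_contDiffOn j f hf ι.1).dimH_image_le (ParS_convex m q D ι.1)
      subset_rfl).trans ?_
    refine (dimH_mono (Set.subset_univ _)).trans ?_
    rw [Real.dimH_univ_eq_finrank, Par_finrank]
    norm_cast
    have h1 : ∑ i, (r - (ι.1 i).card) ≤ q * (r - ρ) := by
      refine (Finset.sum_le_card_nsmul _ _ (r - ρ) fun i _ => ?_).trans (by simp)
      have := hK _ (ι.2 i)
      omega
    have h2 : ∑ k, (D k - q) + r * q = ∑ k, D k := by
      have : ∑ k : Fin r, (D k - q) + ∑ k : Fin r, q = ∑ k, D k := by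
        rw [← Finset.sum_add_distrib]
        exact Finset.sum_congr rfl fun k _ => Nat.sub_add_cancel (hqD k)
      simpa using this
    have h3 : ρ ≤ r := by
      have := hK _ (ι.2 ⟨0, hq⟩)
      have h4 := Finset.card_le_univ (ι.1 ⟨0, hq⟩)
      simp at h4
      omega
    obtain ⟨u, rfl⟩ := Nat.exists_eq_add_of_le h3
    obtain ⟨v, rfl⟩ := Nat.exists_eq_add_of_le hρ
    simp only [M]
    rw [← h2]
    have h5 : 2 + v + u - (2 + v) = u := by omega
    have h6 : 2 + v - 1 = 1 + v := by omega
    rw [h5] at h1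
    rw [h6] at hm
    have h7 : (2 + v + u) * q = q + (1 + v) * q + q * u := by ring
    have h8 : 2 * (1 + v) * q = 2 * ((1 + v) * q) := by ring
    rw [h7]
    rw [h8] at hm
    omega
  have hd := dense_compl_of_dimH_lt_finrank (E := ∀ k : Fin r, Fin (D k) → ℂ) (s := {c | ∃ y, ¬ Few K j q (f y + pertL E j c)}) (by
    rw [hM]
    refine key.trans_lt ?_
    exact_mod_cast (by omega : M - 1 < M))
  refine hd.mono ?_
  intro c hc y
  by_contra hn
  exact hc ⟨y, hn⟩

end PartP4

section PartP5

open Polynomial Topology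
open scoped Manifold ContDiff

lemma isClosed_boundary (m : ℕ) : IsClosed (Cube.boundary (Fin m)) := by
  have e : Cube.boundary (Fin m) = ⋃ i : Fin m, ({y | y i = 0} ∪ {y | y i = 1}) := by
    ext y
    simp [Cube.boundary]
  rw [e]
  refine isClosed_iUnion_of_finite fun i => ?_
  exact (isClosed_eq (continuous_apply i) continuous_const).union
    (isClosed_eq (continuous_apply i) continuous_const)

/-- Evaluation of the `j`-th polynomial at `I`. -/
def evI {r : ℕ} {E : Fin r → ℕ} (j : Fin r) (v : ∀ k : Fin r, Fin (E k) → ℂ) : ℂ :=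
  (toPoly (v j)).eval Complex.I

lemma evI_comb {r : ℕ} {E : Fin r → ℕ} (j : Fin r) (v v' : ∀ k : Fin r, Fin (E k) → ℂ)
    (a b : ℝ) (hab : a + b = 1) (h : evI j v = 0) (h' : evI j v' = 0) :
    evI j (a • v + b • v') = 0 := by
  unfold evI at *
  rw [toPoly_eval] at *
  have hs : ∑ i, (a • v + b • v') j i * Complex.I ^ (i : ℕ) =
      (a : ℂ) * ∑ i, v j i * Complex.I ^ (i : ℕ) + (b : ℂ) * ∑ i, v' j i * Complex.I ^ (i : ℕ) := by
    rw [Finset.mul_sum, Finset.mul_sum, ← Finset.sum_add_distrib]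
    refine Finset.sum_congr rfl fun i _ => ?_
    simp
    ring
  rw [hs]
  have hab' : (a : ℂ) + b = 1 := by exact_mod_cast hab
  linear_combination (a : ℂ) * h + (b : ℂ) * h' - Complex.I ^ (E j) * hab'

lemma exists_smooth_approx {r m : ℕ} {E : Fin r → ℕ} (j : Fin r)
    (F : Cu m → ∀ k : Fin r, Fin (E k) → ℂ) (hF : Continuous F)
    (hb : ∀ y ∈ Cube.boundary (Fin m), evI j (F y) = 0) (ε : ℝ) (hε : 0 < ε) :
    ∃ g : (Fin m → ℝ) → ∀ k : Fin r, Fin (E k) → ℂ, ContDiff ℝ 1 g ∧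
      (∀ y : Cu m, dist (g fun i => (y i : ℝ)) (F y) < ε) ∧
      (∀ y ∈ Cube.boundary (Fin m), evI j (g fun i => (y i : ℝ)) = 0) := by
  let pr : (Fin m → ℝ) → Cu m := fun y i => Set.projIcc 0 1 zero_le_one (y i)
  have hpr : Continuous pr := by
    refine continuous_pi fun i => ?_
    exact continuous_projIcc.comp (continuous_apply i)
  let em : Cu m → (Fin m → ℝ) := fun y i => (y i : ℝ)
  have hem : Continuous em := by
    refine continuous_pi fun i => ?_
    exact continuous_subtype_val.comp (continuous_apply i)
  have hpe : ∀ y, pr (em y) = y := fun y => by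
    funext i
    exact Set.projIcc_val _ _
  let S : Set (Fin m → ℝ) := em '' Cube.boundary (Fin m)
  have hS : IsClosed S := ((isClosed_boundary m).isCompact.image hem).isClosed
  let G := fun y => F (pr y)
  have hG : Continuous G := hF.comp hpr
  have hGS : ∀ y ∈ S, evI j (G y) = 0 := by
    rintro _ ⟨y, hy, rfl⟩
    simp only [G, hpe]
    exact hb y hy
  let t : (Fin m → ℝ) → Set (∀ k : Fin r, Fin (E k) → ℂ) := fun y =>
    {v | dist v (G y) < ε ∧ (y ∈ S → evI j v = 0)}
  have ht : ∀ y, Convex ℝ (t y) := by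
    intro y
    have h1 : Convex ℝ {v : ∀ k : Fin r, Fin (E k) → ℂ | dist v (G y) < ε} := convex_ball _ _
    have h2 : Convex ℝ {v : ∀ k : Fin r, Fin (E k) → ℂ | y ∈ S → evI j v = 0} := by
      intro v hv v' hv' a b ha hb' hab hy
      exact evI_comb j v v' a b hab (hv hy) (hv' hy)
    exact h1.inter h2
  have Hloc : ∀ y, ∃ c, ∀ᶠ y' in 𝓝 y, c ∈ t y' := by
    intro y
    refine ⟨G y, ?_⟩
    have h1 : ∀ᶠ y' in 𝓝 y, dist (G y) (G y') < ε := by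
      have : Continuous fun y' => dist (G y) (G y') := by fun_prop
      exact this.continuousAt.eventually_lt continuousAt_const (by simpa using hε)
    by_cases hy : y ∈ S
    · filter_upwards [h1] with y' h1
      exact ⟨h1, fun _ => hGS y hy⟩
    · filter_upwards [h1, hS.isOpen_compl.mem_nhds hy] with y' h1 h2
      exact ⟨h1, fun h => absurd h h2⟩
  obtain ⟨g, hg⟩ := exists_contMDiffMap_forall_mem_convex_of_local_const (n := 1)
    𝓘(ℝ, Fin m → ℝ) ht Hloc
  refine ⟨g, contMDiff_iff_contDiff.1 g.contMDiff, fun y => ?_, fun y hy => ?_⟩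
  · have := (hg (em y)).1
    simp only [G, hpe] at this
    exact this
  · exact (hg (em y)).2 ⟨y, hy, rfl⟩

lemma stage1 {r m q ρ : ℕ} {K : Set (Finset (Fin r))} (hK : ∀ σ, σ ∉ K → ρ ≤ σ.card)
    {D E : Fin r → ℕ} {j : Fin r}
    (hEj : E j = D j + 1) (hEk : ∀ k, k ≠ j → E k = D k) (hqD : ∀ k, q ≤ D k)
    (hm : m < 2 * (ρ - 1) * q)
    (F : C(Cu m, PolSp K E)) (hb : ∀ y ∈ Cube.boundary (Fin m), F y ∈ AI K E j) :
    ∃ F' : C(Cu m, PolSp K E), (∀ y, Few K j q (F' y).1) ∧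
      (∀ y ∈ Cube.boundary (Fin m), F' y ∈ AI K E j) ∧
      F.HomotopicWith F' (fun f => ∀ y ∈ Cube.boundary (Fin m), f y ∈ AI K E j) := by
  have hρ : 1 ≤ ρ := by
    by_contra hc
    have : ρ - 1 = 0 := by omega
    simp [this] at hm
  have hFc : Continuous fun y => (F y).1 := continuous_subtype_val.comp F.continuous
  have hopen : IsOpen (PolSp K E) := PolSp_isOpen fun σ hσ => by
    rw [← Finset.card_pos]
    have := hK σ hσ
    omega
  have hcomp : IsCompact (Set.range fun y => (F y).1) := isCompact_range hFc
  obtain ⟨δ, hδ, hsub⟩ := hcomp.exists_thickening_subset_open hopen (by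
    rintro _ ⟨y, rfl⟩
    exact (F y).2)
  obtain ⟨g, hg, hgF, hgb⟩ := exists_smooth_approx j (fun y => (F y).1) hFc hb (δ / 2) (by linarith)
  have hd := dense_few hK hEj hEk hqD hm g hg
  obtain ⟨c, hc1, hc2⟩ := hd.inter_open_nonempty {c | dist (pertL (D := D) E j c) 0 < δ / 2}
    (isOpen_lt ((pertL_cont E j).dist continuous_const) continuous_const)
    ⟨0, by simp only [Set.mem_ofPred_eq, pertL_zero, dist_self]; linarith⟩
  have hc1' : ‖pertL E j c‖ < δ / 2 := by simpa using hc1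
  let H : Cu m → ∀ k : Fin r, Fin (E k) → ℂ := fun y => g (fun i => (y i : ℝ)) + pertL E j c
  have hHc : Continuous H := by
    refine (hg.continuous.comp ?_).add continuous_const
    exact continuous_pi fun i => continuous_subtype_val.comp (continuous_apply i)
  have hHd : ∀ y, ‖H y - (F y).1‖ < δ := by
    intro y
    have h1 := hgF y
    rw [dist_eq_norm] at h1
    have e : H y - (F y).1 = (g (fun i => (y i : ℝ)) - (F y).1) + pertL E j c := by
      simp only [H]; abel
    rw [e]
    refine (norm_add_le _ _).trans_lt ?_
    linarith
  have hHb : ∀ y ∈ Cube.boundary (Fin m), evI j (H y) = 0 := by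
    intro y hy
    have := hgb y hy
    unfold evI at this ⊢
    simp only [H]
    rw [toPoly_pert hEj hEk, eval_add, this]
    simp [pertP]
  have hline : ∀ (y : Cu m) (l : unitInterval),
      (1 - l.1) • (F y).1 + l.1 • H y ∈ PolSp K E := by
    intro y l
    apply hsub
    rw [Metric.mem_thickening_iff]
    refine ⟨(F y).1, ⟨y, rfl⟩, ?_⟩
    rw [dist_eq_norm]
    have e : (1 - l.1) • (F y).1 + l.1 • H y - (F y).1 = l.1 • (H y - (F y).1) := by
      rw [sub_smul, smul_sub, one_smul]; abel
    rw [e, norm_smul, Real.norm_eq_abs, abs_of_nonneg l.2.1]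
    have := hHd y
    have h2 := l.2.2
    nlinarith [norm_nonneg (H y - (F y).1), l.2.1]
  have hHmem : ∀ y, H y ∈ PolSp K E := fun y => by
    simpa using hline y 1
  refine ⟨⟨fun y => ⟨H y, hHmem y⟩, hHc.subtype_mk _⟩, fun y => hc2 _, fun y hy => hHb y hy, ?_⟩
  refine homotopicWith_mk (fun p => ⟨(1 - p.1.1) • (F p.2).1 + p.1.1 • H p.2, hline p.2 p.1⟩)
    ?_ ?_ ?_ ?_
  · refine Continuous.subtype_mk ?_ _
    have a1 : Continuous fun p : unitInterval × Cu m => p.1.1 :=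
      continuous_subtype_val.comp continuous_fst
    have a2 : Continuous fun p : unitInterval × Cu m => (F p.2).1 := hFc.comp continuous_snd
    have a3 : Continuous fun p : unitInterval × Cu m => H p.2 := hHc.comp continuous_snd
    exact ((continuous_const.sub a1).smul a2).add (a1.smul a3)
  · intro y
    apply Subtype.ext
    simp
  · intro y
    apply Subtype.ext
    simp
  · intro l y hy
    exact evI_comb j _ _ _ _ (by ring) (hb y hy) (hHb y hy)

/-- The inverse of multiplication by `X - I`. -/
def divC {r : ℕ} (D E : Fin r → ℕ) (f : ∀ k : Fin r, Fin (E k) → ℂ) :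
    ∀ k : Fin r, Fin (D k) → ℂ :=
  fun k => coeffsOf (D k) (toPoly (f k) /ₘ (X - C Complex.I) ^ (E k - D k))

lemma divC_spec {r : ℕ} {K : Set (Finset (Fin r))} {D E : Fin r → ℕ} {j : Fin r}
    (hEj : E j = D j + 1) (hEk : ∀ k, k ≠ j → E k = D k)
    (f : PolSp K E) (hf : f ∈ AI K E j) (k : Fin r) :
    toPoly (f.1 k) = toPoly (divC D E f.1 k) * (X - C Complex.I) ^ (E k - D k) := by
  have h1 : (X - C Complex.I) ^ (E k - D k) * (toPoly (f.1 k) /ₘ (X - C Complex.I) ^ (E k - D k))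
      = toPoly (f.1 k) := by
    by_cases hk : k = j
    · subst hk
      have he : E k - D k = 1 := by omega
      rw [he, pow_one]
      exact mul_divByMonic_eq_iff_isRoot.2 hf
    · have he : E k - D k = 0 := by rw [hEk k hk, Nat.sub_self]
      rw [he]
      simp
  have hmo : ((X - C Complex.I) ^ (E k - D k)).Monic := (monic_X_sub_C _).pow _
  have h2 : (toPoly (f.1 k) /ₘ (X - C Complex.I) ^ (E k - D k)).Monic := by
    refine Monic.of_mul_monic_left hmo ?_
    rw [h1]
    exact toPoly_monic _
  have hle : D k ≤ E k := by
    by_cases hk : k = j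
    · subst hk; omega
    · rw [hEk k hk]
  have h3 : (toPoly (f.1 k) /ₘ (X - C Complex.I) ^ (E k - D k)).natDegree = D k := by
    rw [natDegree_divByMonic _ hmo, toPoly_natDegree, (monic_X_sub_C _).natDegree_pow,
      natDegree_X_sub_C]
    omega
  unfold divC
  rw [toPoly_coeffsOf h2 h3, mul_comm, h1]

lemma divC_mem {r : ℕ} {K : Set (Finset (Fin r))} {D E : Fin r → ℕ} {j : Fin r}
    (hEj : E j = D j + 1) (hEk : ∀ k, k ≠ j → E k = D k)
    (f : PolSp K E) (hf : f ∈ AI K E j) : divC D E f.1 ∈ PolSp K D := by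
  intro σ hσ t
  obtain ⟨k, hk, hne⟩ := f.2 σ hσ t
  refine ⟨k, hk, fun h0 => hne ?_⟩
  rw [divC_spec hEj hEk f hf k, eval_mul, h0, zero_mul]

lemma divC_cont {r : ℕ} {D E : Fin r → ℕ} {j : Fin r}
    (hEj : E j = D j + 1) (hEk : ∀ k, k ≠ j → E k = D k) : Continuous (divC D E) := by
  refine continuous_pi fun k => ?_
  unfold divC
  have hc : Continuous fun f : ∀ k : Fin r, Fin (E k) → ℂ => f k := continuous_apply k
  refine CF.coeffsOf ?_ _
  by_cases hk : k = j
  · subst hk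
    intro n
    simp only [hEj, Nat.add_sub_cancel_left, pow_one, coeff_divByMonic_X_sub_C, toPoly_natDegree]
    exact continuous_finsetSum _ fun i _ => continuous_const.mul (CF.toPoly hc i)
  · simp only [hEk k hk, Nat.sub_self, pow_zero, divByMonic_one]
    exact CF.toPoly hc

lemma LP_step {r m q ρ : ℕ} {K : Set (Finset (Fin r))} (hK : ∀ σ, σ ∉ K → ρ ≤ σ.card)
    (hρ : 2 ≤ ρ) (hq : 1 ≤ q)
    {D E : Fin r → ℕ} (hle : ∀ k, D k ≤ E k) {j : Fin r}
    (hEj : E j = D j + 1) (hEk : ∀ k, k ≠ j → E k = D k) (hqD : ∀ k, q ≤ D k)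
    (hm : m < 2 * (ρ - 1) * q) : LP m (iotaMap K D E hle) := by
  have hsp : ∀ (x : PolSp K D) k, toPoly ((iotaMap K D E hle x).1 k) =
      toPoly (x.1 k) * (X - C Complex.I) ^ (E k - D k) := fun x k =>
    toPoly_mulC (hle k) _ _
  have hsA : ∀ x, iotaMap K D E hle x ∈ AI K E j := by
    intro x
    show (toPoly ((iotaMap K D E hle x).1 j)).eval Complex.I = 0
    rw [hsp, hEj, Nat.add_sub_cancel_left]
    simp
  refine LP.of_compress (iotaMap K D E hle) (AI K E j)
    ⟨fun a => ⟨divC D E a.1.1, divC_mem hEj hEk a.1 a.2⟩, Continuous.subtype_mk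
      ((divC_cont hEj hEk).comp (continuous_subtype_val.comp continuous_subtype_val)) _⟩
    hsA ?_ ?_ ?_
  · intro x
    apply Subtype.ext
    funext k
    show coeffsOf (D k) (toPoly ((iotaMap K D E hle x).1 k) /ₘ _) = x.1 k
    rw [hsp, mul_comm, mul_divByMonic_cancel_left _ ((monic_X_sub_C _).pow _), coeffsOf_toPoly]
  · intro a
    apply Subtype.ext
    funext k
    apply toPoly_inj
    rw [hsp]
    exact (divC_spec hEj hEk a.1 a.2 k).symm
  · intro F hF
    obtain ⟨F₁, hfew, hb, hh⟩ := stage1 hK hEj hEk hqD hm F hF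
    obtain ⟨F₂, hA, hh'⟩ := stage2 (fun σ hσ => hρ.trans (hK σ hσ)) j hEj hq (hqD j) F₁ hfew hb
    exact ⟨F₂, hA, hh.trans hh'⟩

lemma rmin_le {r : ℕ} (K : Set (Finset (Fin r))) (σ : Finset (Fin r)) (hσ : σ ∉ K) :
    rmin K ≤ σ.card := by
  induction σ using Finset.strongInduction with
  | H σ ih =>
  by_cases h : ∀ t ⊂ σ, t ∈ K
  · exact Nat.sInf_le ⟨σ, ⟨hσ, h⟩, rfl⟩
  · push Not at h
    obtain ⟨t, ht, htK⟩ := h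
    exact (ih t ht htK).trans (Finset.card_le_card ht.1)

end PartP5

/-- The stabilization map
`s_{D,D'} : Pol*_D(S¹,X_Σ) → Pol*_{D'}(S¹,X_Σ)`, for `D' − D ∈ (ℤ_{≥0})^r ∖ {0}` and any
admissible choice of `(φ_D, (x_{D,1},…,x_{D,r}))`, is a homotopy equivalence through
dimension `d(D,Σ) = 2(r_min(Σ)−1)d_min − 2`. -/
theorem stabilization_homotopyEquiv_through
    {n r : ℕ} (F : Fan n) (N : Fin r → Fin n → ℤ)
    (hPG : IsPrimGens F N) (h1 : Cond1 N) (h2 : Cond2 N)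
    (D D' : Fin r → ℕ) (hD : ∀ k, 0 < D k) (hD' : ∀ k, 0 < D' k)
    (hle : ∀ k, D k ≤ D' k) (hne : D ≠ D')
    (φ : ℂ → ℂ) (hφ : AdmissiblePhi ((∑ k, D k : ℕ) : ℝ) φ)
    (xpt : Fin r → ℂ) (hx : ∀ k, ((∑ k, D k : ℕ) : ℝ) < (xpt k).re)
    (hxinj : Function.Injective xpt)
    (s : C(↥(PolSp (KC F N) D), ↥(PolSp (KC F N) D')))
    (hs : StabSpec (KC F N) φ xpt D D' ⇑s) :
    HomotopyEquivThrough s (dBound (KC F N) D) := by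
  intro x k hk
  unfold dBound at hk
  have hq : 1 ≤ dmin D := by
    by_contra hc
    have : dmin D = 0 := by omega
    rw [this] at hk
    simp at hk
    omega
  have hρ : 2 ≤ rmin (KC F N) := by
    by_contra hc
    have h3 : (rmin (KC F N) : ℤ) - 1 ≤ 0 := by omega
    have h4 : (0 : ℤ) ≤ dmin D := by omega
    have := mul_nonpos_of_nonpos_of_nonneg h3 h4
    rw [mul_assoc] at hk
    omega
  have hm : k + 1 < 2 * (rmin (KC F N) - 1) * dmin D := by
    zify [(by omega : 1 ≤ rmin (KC F N))]
    linarith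
  have hqD : ∀ i, dmin D ≤ D i := fun i => Nat.sInf_le ⟨i, rfl⟩
  have key : ∀ m, m < 2 * (rmin (KC F N) - 1) * dmin D → LP m s := by
    intro m hm
    refine LP_s_of_iota (KC F N) D D' hle hφ
      (fun σ hσ => hρ.trans (rmin_le _ σ hσ)) xpt hx hxinj s hs ?_
    refine LP_iota_of_step (KC F N) (fun D₁ => ∀ i, dmin D ≤ D₁ i)
      (fun D₁ E h hle i => (h i).trans (hle i)) ?_ _ D D' hle hqD rfl
    intro D₁ E hle₁ j hQ hEj hEk
    exact LP_step (rmin_le _) hρ hq hle₁ hEj hEk hQ hm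
  exact ⟨piMap_injective s (key _ hm) x, piMap_surjective s (key _ (by omega)) x⟩

end Toric
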